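/- arXiv:1004.1326 — 2 statements merged into one kernel-verified Lean document; each statement's English description precedes it below -/
import Mathlib

section
/- Let x ∈ ℝ² have irrational slope and y ∈ ℝ² have irrational slope y₁/y₂. Then there exist infinitely many γ ∈ SL(2,ℤ) such that |γx − y| ≤ 7√5 · |x|^{1/3} |y|^{2/3} / |γ|^{1/3}. -/
open Matrix MeasureTheory

/-- Denominator `q k` of the `k`-th convergent of the continued fraction of `ξ`. -/
noncomputable def qden (ξ : ℝ) (k : ℕ) : ℝ := (GenContFract.of ξ).dens k

/-- Numerator `p k` of the `k`-th convergent of the continued fraction of `ξ`. -/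
noncomputable def pnum (ξ : ℝ) (k : ℕ) : ℝ := (GenContFract.of ξ).nums k

/-- Action of an integer matrix on `ℝ²` by left multiplication. -/
noncomputable def act (g : Matrix (Fin 2) (Fin 2) ℤ) (x : Fin 2 → ℝ) : Fin 2 → ℝ :=
  (g.map (Int.cast : ℤ → ℝ)).mulVec x

/-- Sup norm of an integer `2 × 2` matrix. -/
noncomputable def mnorm (g : Matrix (Fin 2) (Fin 2) ℤ) : ℝ :=
  max (max |(g 0 0 : ℝ)| |(g 0 1 : ℝ)|) (max |(g 1 0 : ℝ)| |(g 1 1 : ℝ)|)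

/-- Sup norm on `ℝ²`. -/
noncomputable def vnorm (v : Fin 2 → ℝ) : ℝ := max |v 0| |v 1|

/-- The set of exponents `w` such that `|v α + u| ≤ |v| ^ (-w)` has infinitely many
integer solutions `(v, u)`; its supremum is the irrationality measure `ω(α)`. -/
def omegaSet (α : ℝ) : Set ℝ :=
  {w : ℝ | {p : ℤ × ℤ | |(p.1 : ℝ) * α + (p.2 : ℝ)| ≤ |(p.1 : ℝ)| ^ (-w)}.Infinite}

/-- The set of exponents `μ` such that `|γ x - y| ≤ |γ| ^ (-μ)` for infinitely many
`γ ∈ SL(2, ℤ)`; its supremum is `μ(x, y)`. -/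
def muSet (x y : Fin 2 → ℝ) : Set ℝ :=
  {μ : ℝ | {γ : Matrix (Fin 2) (Fin 2) ℤ |
    γ.det = 1 ∧ vnorm (act γ x - y) ≤ mnorm γ ^ (-μ)}.Infinite}

/-- The set of exponents `μ` such that for all sufficiently large `T` there is
`γ ∈ SL(2, ℤ)` with `|γ| ≤ T` and `|γ x - y| ≤ T ^ (-μ)`; its supremum is `μ̂(x, y)`. -/
def muHatSet (x y : Fin 2 → ℝ) : Set ℝ :=
  {μ : ℝ | ∃ T₀ : ℝ, ∀ T : ℝ, T₀ ≤ T → ∃ γ : Matrix (Fin 2) (Fin 2) ℤ,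
    γ.det = 1 ∧ mnorm γ ≤ T ∧ vnorm (act γ x - y) ≤ T ^ (-μ)}

open Filter

/-!
Read the convergents of the slope of a plane vector as integer vectors: consecutive ones `u`, `u'`
form a basis of `ℤ²`, and `x = a u + b u'` with `0 < a < b` and `b` comparable to `|x| / |u'|`. Let
`w`, `v`, `v'` be consecutive convergents for `y`, and choose the sign of `w` so that `(v, w)` is
oriented like `(u, u')`. For every integer `l`, the matrix sending `u` to `v` and `u'` to `l v + w`
has determinant one and sends `x` to `(a + b l) v + b w`. A suitable `l` brings this point within
`2 b |v|` of a point of the line `ℝ v`, which itself passes within `|y| / (|v| |v'|)` of `y`.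
If `|y| |u| ≤ |x| |v|³ ≤ |y| |u'| ≤ |x| |v'|³`, then the matrix has norm at most `6 |v|³ |u'|`, and
both errors are at most `(|x| |y|² / (|v|³ |u'|))^{1/3}`. Such interlaced convergents exist
arbitrarily far out because `|u|` and `|v|` run through sequences tending to infinity. At least one
of two neighbouring values of `l` misses `y`, so the errors obtained are nonzero and tend to zero,
which forces infinitely many matrices.
-/

section Sequences

lemma exists_seq_of_forall_exists_next {α : Type*} {P : α → α → Prop} {p q : α} (hpq : P p q)
    (hP : ∀ p q, P p q → ∃ r, P q r) : ∃ f : ℕ → α, ∀ n, P (f n) (f (n + 1)) := by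
  choose! next hnext using hP
  let step : α × α → α × α := fun s => (s.2, next s.1 s.2)
  have hinv (n : ℕ) : P (step^[n] (p, q)).1 (step^[n] (p, q)).2 := by
    induction n with
    | zero => exact hpq
    | succ n ih =>
      rw [Function.iterate_succ_apply']
      exact hnext _ _ ih
  refine ⟨fun n => (step^[n] (p, q)).1, fun n => ?_⟩
  simpa only [Function.iterate_succ_apply'] using hinv n

lemma tendsto_norm_atTop_of_injective {E : Type*} [NormedAddCommGroup E] [ProperSpace E]
    [DiscreteTopology E] {u : ℕ → E} (hu : Function.Injective u) :
    Tendsto (fun n => ‖u n‖) atTop atTop := by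
  have h := hu.tendsto_cofinite
  rw [Nat.cofinite_eq_atTop, ← cocompact_eq_cofinite] at h
  exact tendsto_norm_cocompact_atTop.comp h

lemma exists_ge_and_le_and_lt_succ {α : Type*} [LinearOrder α] [NoMaxOrder α] {f : ℕ → α}
    (hf : Tendsto f atTop atTop) {k : ℕ} {B : α} (hk : f k ≤ B) :
    ∃ n ≥ k, f n ≤ B ∧ B < f (n + 1) := by
  by_contra! hstep
  have hle (n : ℕ) (hn : k ≤ n) : f n ≤ B := Nat.le_induction hk hstep n hn
  obtain ⟨n, hn, hBn⟩ := ((eventually_ge_atTop k).and (hf.eventually_gt_atTop B)).exists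
  exact (hle n hn).not_gt hBn

lemma exists_interlaced_index {α : Type*} [LinearOrder α] [NoMaxOrder α] {f g : ℕ → α}
    (hf : Tendsto f atTop atTop) (hg : Tendsto g atTop atTop) (hg' : Monotone g) (B : α) :
    ∃ m n, f m ≤ g n ∧ g n ≤ f (m + 1) ∧ f (m + 1) ≤ g (n + 1) ∧ B ≤ f (m + 1) := by
  obtain ⟨k, hk⟩ := (hg.eventually_ge_atTop (max (f 0) B)).exists
  obtain ⟨m, -, hm, hm'⟩ := exists_ge_and_le_and_lt_succ hf ((le_max_left _ _).trans hk)
  obtain ⟨n, hkn, hn, hn'⟩ := exists_ge_and_le_and_lt_succ hg hm'.le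
  exact ⟨m, n, hm.trans (hg' hkn), hn, hn'.le, ((le_max_right _ _).trans hk).trans hm'.le⟩

lemma infinite_of_forall_exists_pos_lt {α : Type*} {s : Set α} (f : α → ℝ)
    (h : ∀ ε > 0, ∃ a ∈ s, 0 < f a ∧ f a < ε) : s.Infinite := by
  refine Set.Infinite.of_image (fun a => (f a)⁻¹) (Set.infinite_of_forall_exists_gt fun B => ?_)
  obtain ⟨a, ha, hpos, hlt⟩ := h (|B| + 1)⁻¹ (by positivity)
  exact ⟨_, Set.mem_image_of_mem _ ha, ((le_abs_self B).trans_lt (lt_add_one _)).trans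
    ((lt_inv_comm₀ hpos (by positivity)).mp hlt)⟩

end Sequences

section Plane

lemma norm_fin_two {E : Type*} [SeminormedAddGroup E] (v : Fin 2 → E) :
    ‖v‖ = max ‖v 0‖ ‖v 1‖ := by
  simp [Pi.norm_def, Finset.univ_fin2]

lemma vnorm_eq_norm (v : Fin 2 → ℝ) : vnorm v = ‖v‖ := (norm_fin_two v).symm

lemma norm_intCast_comp {ι : Type*} [Fintype ι] (u : ι → ℤ) :
    ‖(Int.cast ∘ u : ι → ℝ)‖ = ‖u‖ := by
  rw [Pi.norm_def, Pi.norm_def]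
  rfl

/-- The wedge product of two plane vectors, that is, the determinant of the matrix with columns
`u` and `v`. -/
def wedge {R : Type*} [CommRing R] (u v : Fin 2 → R) : R := u 0 * v 1 - u 1 * v 0

section

variable {R : Type*} [CommRing R] (u v w : Fin 2 → R) (c : R)

lemma wedge_comm : wedge u v = -wedge v u := by
  simp only [wedge]
  ring

lemma wedge_neg_right : wedge u (-v) = -wedge u v := by
  simp only [wedge, Pi.neg_apply]
  ring

lemma wedge_add_smul_right : wedge u (v + c • u) = wedge u v := by
  simp only [wedge, Pi.add_apply, Pi.smul_apply, smul_eq_mul]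
  ring

lemma wedge_smul_add_smul_left (a b : R) :
    wedge (a • u + b • v) w = a * wedge u w + b * wedge v w := by
  simp only [wedge, Pi.add_apply, Pi.smul_apply, smul_eq_mul]
  ring

lemma wedge_self : wedge u u = 0 := by
  simp only [wedge]
  ring

lemma wedge_intCast_comp (u v : Fin 2 → ℤ) :
    wedge (Int.cast ∘ u : Fin 2 → R) (Int.cast ∘ v) = (wedge u v : ℤ) := by
  simp [wedge]

end

lemma exists_near_smul (y : Fin 2 → ℝ) {v : Fin 2 → ℝ} (hv : v ≠ 0) :
    ∃ c : ℝ, |c| ≤ ‖y‖ / ‖v‖ ∧ ‖c • v - y‖ ≤ |wedge y v| / ‖v‖ := by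
  have hv' : 0 < ‖v‖ := norm_pos_iff.mpr hv
  obtain ⟨i, hi⟩ : ∃ i, ‖v‖ = |v i| := by
    rw [norm_fin_two]
    rcases max_choice ‖v 0‖ ‖v 1‖ with h | h
    exacts [⟨0, h⟩, ⟨1, h⟩]
  have hvi : v i ≠ 0 := abs_pos.mp (hi ▸ hv')
  refine ⟨y i / v i, ?_, ?_⟩
  · rw [abs_div, hi]
    gcongr
    exact norm_le_pi_norm y i
  · rw [pi_norm_le_iff_of_nonneg (by positivity)]
    intro j
    have hj : ((y i / v i) • v - y) j = (y i * v j - y j * v i) / v i := by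
      simp only [Pi.sub_apply, Pi.smul_apply, smul_eq_mul]
      field_simp
    rw [hj, norm_div, Real.norm_eq_abs (v i), ← hi]
    gcongr
    fin_cases i <;> fin_cases j <;> simp [wedge, abs_sub_comm, mul_comm]

lemma exists_int_abs_sub_le_one_and_ne (w c : ℝ) : ∃ l : ℤ, |(l : ℝ) - w| ≤ 1 ∧ (l : ℝ) ≠ c := by
  have hle := Int.floor_le w
  have hlt := Int.lt_floor_add_one w
  by_cases hc : (⌊w⌋ : ℝ) = c
  · exact ⟨⌊w⌋ + 1, by push_cast; rw [abs_le]; constructor <;> linarith, by simp [← hc]⟩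
  · exact ⟨⌊w⌋, by rw [abs_le]; constructor <;> linarith, hc⟩

lemma exists_int_smul_add_smul_near {a b : ℝ} (hb : 0 < b) (y : Fin 2 → ℝ) {v w : Fin 2 → ℝ}
    (hvw : wedge v w ≠ 0) :
    ∃ l : ℤ, |(l : ℝ)| ≤ 1 + (‖y‖ / ‖v‖ + |a|) / b ∧ (a + b * l) • v + b • w ≠ y ∧
      ‖(a + b * l) • v + b • w - y‖ ≤ b * (‖v‖ + ‖w‖) + |wedge y v| / ‖v‖ := by
  have hv : v ≠ 0 := by
    rintro rfl
    simp [wedge] at hvw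
  obtain ⟨c, hc, hcy⟩ := exists_near_smul y hv
  obtain ⟨l, hl, hne⟩ := exists_int_abs_sub_le_one_and_ne ((c - a) / b)
    ((wedge y w / wedge v w - a) / b)
  have hlc : |a + b * l - c| ≤ b := by
    have h : a + b * l - c = b * (l - (c - a) / b) := by field_simp; ring
    rw [h, abs_mul, abs_of_pos hb]
    exact mul_le_of_le_one_right hb.le hl
  refine ⟨l, ?_, ?_, ?_⟩
  · calc |(l : ℝ)| ≤ |(l : ℝ) - (c - a) / b| + |(c - a) / b| := by
          simpa using abs_add_le ((l : ℝ) - (c - a) / b) ((c - a) / b)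
      _ ≤ 1 + (‖y‖ / ‖v‖ + |a|) / b := by
          rw [abs_div, abs_of_pos hb]
          gcongr
          exact (abs_sub _ _).trans (by gcongr)
  · rintro rfl
    apply hne
    have h : wedge ((a + b * l) • v + b • w) w = (a + b * l) * wedge v w := by
      rw [wedge_smul_add_smul_left, wedge_self, mul_zero, add_zero]
    rw [h]
    field_simp
    ring
  · calc ‖(a + b * l) • v + b • w - y‖ = ‖(a + b * l - c) • v + b • w + (c • v - y)‖ := by
          congr 1; module
      _ ≤ |a + b * l - c| * ‖v‖ + b * ‖w‖ + ‖c • v - y‖ := by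
          refine norm_add₃_le.trans_eq ?_
          rw [norm_smul, norm_smul, Real.norm_eq_abs, Real.norm_of_nonneg hb.le]
      _ ≤ b * ‖v‖ + b * ‖w‖ + |wedge y v| / ‖v‖ := by gcongr
      _ = _ := by ring

end Plane

section Matrices

lemma mnorm_le {γ : Matrix (Fin 2) (Fin 2) ℤ} {C : ℝ} (h : ∀ i j, |(γ i j : ℝ)| ≤ C) :
    mnorm γ ≤ C :=
  max_le (max_le (h 0 0) (h 0 1)) (max_le (h 1 0) (h 1 1))

lemma mnorm_pos {γ : Matrix (Fin 2) (Fin 2) ℤ} (hγ : γ ≠ 0) : 0 < mnorm γ := by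
  contrapose! hγ
  ext i j
  have h : |(γ i j : ℝ)| ≤ 0 := by
    simp only [mnorm, max_le_iff] at hγ
    fin_cases i <;> fin_cases j <;> tauto
  simpa using h

lemma exists_det_eq_one_and_mulVec_eq {u u' v v' : Fin 2 → ℤ} (hu : |wedge u u'| = 1)
    (huv : wedge v v' = wedge u u') :
    ∃ γ : Matrix (Fin 2) (Fin 2) ℤ, γ.det = 1 ∧ γ *ᵥ u = v ∧ γ *ᵥ u' = v' ∧
      mnorm γ ≤ ‖v‖ * ‖u'‖ + ‖v'‖ * ‖u‖ := by
  set d := wedge u u' with hd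
  have hdd : d * d = 1 := by rw [← abs_mul_abs_self, hu, one_mul]
  simp only [wedge] at huv hd
  refine ⟨of fun i => ![d * (v i * u' 1 - v' i * u 1), d * (v' i * u 0 - v i * u' 0)],
    ?_, ?_, ?_, ?_⟩
  · simp only [det_fin_two, of_apply, cons_val_zero, cons_val_one]
    linear_combination d ^ 2 * (u 0 * u' 1 - u 1 * u' 0) * huv - d ^ 3 * hd + (d ^ 2 + 1) * hdd
  · ext i
    simp only [mulVec, dotProduct, Fin.sum_univ_two, of_apply, cons_val_zero, cons_val_one]
    linear_combination v i * hdd - d * v i * hd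
  · ext i
    simp only [mulVec, dotProduct, Fin.sum_univ_two, of_apply, cons_val_zero, cons_val_one]
    linear_combination v' i * hdd - d * v' i * hd
  · have hentry (i j : Fin 2) : |(v i * u' j - v' i * u j : ℝ)| ≤ ‖v‖ * ‖u'‖ + ‖v'‖ * ‖u‖ := by
      refine (abs_sub _ _).trans ?_
      rw [abs_mul, abs_mul]
      gcongr <;> exact norm_le_pi_norm (_ : Fin 2 → ℤ) _
    have hd1 : |(d : ℝ)| = 1 := by exact_mod_cast hu
    refine mnorm_le fun i j => ?_
    fin_cases j
    · simpa [abs_mul, hd1] using hentry i 1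
    · simpa [abs_mul, hd1, abs_sub_comm] using hentry i 0

lemma act_smul_add_smul (γ : Matrix (Fin 2) (Fin 2) ℤ) (a b : ℝ) (u u' : Fin 2 → ℤ) :
    act γ (a • Int.cast ∘ u + b • Int.cast ∘ u') =
      a • Int.cast ∘ (γ *ᵥ u) + b • Int.cast ∘ (γ *ᵥ u') := by
  have h (u : Fin 2 → ℤ) : γ.map (Int.cast : ℤ → ℝ) *ᵥ (Int.cast ∘ u) = Int.cast ∘ (γ *ᵥ u) :=
    funext fun i => ((Int.castRingHom ℝ).map_mulVec γ u i).symm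
  rw [act, mulVec_add, mulVec_smul, mulVec_smul, h, h]

end Matrices

section Convergents

/-- `u` and `u'` are consecutive convergents of the slope of `x`, seen as integer vectors: they form
a basis of `ℤ²` in which `x` has positive coordinates `a < b`. Signs are normalised by asking that
`u` and `u'` lie in a common closed quadrant, rather than by restricting `x`. -/
structure IsConvergentPair (x : Fin 2 → ℝ) (u u' : Fin 2 → ℤ) (a b : ℝ) : Prop where
  eq_add : x = a • Int.cast ∘ u + b • Int.cast ∘ u'
  abs_wedge : |wedge u u'| = 1
  mul_apply_nonneg : ∀ i, 0 ≤ u i * u' i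
  norm_le : ‖u‖ ≤ ‖u'‖
  pos : 0 < a
  lt : a < b

lemma ne_smul_intCast_of_irrational {x : Fin 2 → ℝ} (hx : Irrational (x 0 / x 1)) (c : ℝ)
    (u : Fin 2 → ℤ) : x ≠ c • Int.cast ∘ u := by
  rintro rfl
  rcases eq_or_ne c 0 with rfl | hc
  · simp at hx
  · exact hx ⟨u 0 / u 1, by simp [mul_div_mul_left _ _ hc]⟩

lemma abs_le_abs_add_of_mul_nonneg {R : Type*} [CommRing R] [LinearOrder R] [IsStrictOrderedRing R]
    {a b : R} (h : 0 ≤ a * b) : |b| ≤ |a + b| :=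
  sq_le_sq.mp (by nlinarith [sq_nonneg a])

namespace IsConvergentPair

variable {x : Fin 2 → ℝ} {u u' : Fin 2 → ℤ} {a b : ℝ}

lemma pos_right (h : IsConvergentPair x u u' a b) : 0 < b := h.pos.trans h.lt

lemma ne_zero_right (h : IsConvergentPair x u u' a b) : u' ≠ 0 := by
  rintro rfl
  simpa [wedge] using h.abs_wedge

lemma mul_norm_le (h : IsConvergentPair x u u' a b) : b * ‖u'‖ ≤ ‖x‖ := by
  rw [← norm_intCast_comp, ← norm_smul_of_nonneg h.pos_right.le,
    pi_norm_le_iff_of_nonneg (norm_nonneg x)]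
  intro i
  refine le_trans ?_ (norm_le_pi_norm x i)
  have hi : (0 : ℝ) ≤ u i * u' i := by exact_mod_cast h.mul_apply_nonneg i
  have hmul : 0 ≤ (a * u i) * (b * u' i) := by
    have := mul_nonneg (mul_nonneg h.pos.le h.pos_right.le) hi
    linarith
  simpa [h.eq_add] using abs_le_abs_add_of_mul_nonneg hmul

lemma norm_le_two_mul (h : IsConvergentPair x u u' a b) : ‖x‖ ≤ 2 * (b * ‖u'‖) := by
  have hb : 0 < b := h.pos.trans h.lt
  calc ‖x‖ ≤ a * ‖u‖ + b * ‖u'‖ := by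
        rw [h.eq_add]
        refine (norm_add_le _ _).trans_eq ?_
        rw [norm_smul, norm_smul, norm_intCast_comp, norm_intCast_comp,
          Real.norm_of_nonneg h.pos.le, Real.norm_of_nonneg hb.le]
    _ ≤ b * ‖u'‖ + b * ‖u'‖ := by
        gcongr
        exacts [h.lt.le, h.norm_le]
    _ = 2 * (b * ‖u'‖) := by ring

lemma abs_wedge_left (h : IsConvergentPair x u u' a b) : |wedge x (Int.cast ∘ u)| = b := by
  have hw : wedge x (Int.cast ∘ u) = -(b * (wedge u u' : ℤ)) := by
    rw [h.eq_add, wedge_smul_add_smul_left, wedge_self, wedge_comm, wedge_intCast_comp]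
    ring
  rw [hw, abs_neg, abs_mul, ← Int.cast_abs, h.abs_wedge, Int.cast_one, mul_one,
    abs_of_pos (h.pos.trans h.lt)]

lemma exists_next (hx : Irrational (x 0 / x 1)) (h : IsConvergentPair x u u' a b) :
    ∃ u'' c, IsConvergentPair x u' u'' c a := by
  set k : ℤ := ⌊b / a⌋
  have hk : 1 ≤ k := Int.le_floor.mpr (by simpa [one_le_div h.pos] using h.lt.le)
  have heq : x = (b - k * a) • Int.cast ∘ u' + a • Int.cast ∘ (u + k • u') := by
    rw [h.eq_add]
    ext i
    simp only [Pi.add_apply, Pi.smul_apply, Function.comp_apply, smul_eq_mul, Int.cast_add,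
      Int.cast_mul]
    ring
  have hpos : 0 < b - k * a := by
    have hle : k * a ≤ b := (le_div_iff₀ h.pos).mp (Int.floor_le _)
    refine (sub_nonneg.mpr hle).lt_of_ne fun h0 =>
      ne_smul_intCast_of_irrational hx a (u + k • u') ?_
    rw [heq, ← h0]
    simp
  have hlt : b - k * a < a := by
    have := (div_lt_iff₀ h.pos).mp (Int.lt_floor_add_one (b / a))
    linarith
  have hmul (i : Fin 2) : 0 ≤ u i * (k * u' i) := by
    have := mul_nonneg (zero_le_one.trans hk) (h.mul_apply_nonneg i)
    linarith
  refine ⟨u + k • u', b - k * a, heq, ?_, fun i => ?_, ?_, hpos, hlt⟩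
  · rw [wedge_add_smul_right, wedge_comm, abs_neg, h.abs_wedge]
  · have := h.mul_apply_nonneg i
    have := mul_nonneg (zero_le_one.trans hk) (sq_nonneg (u' i))
    simp only [Pi.add_apply, Pi.smul_apply, smul_eq_mul]
    linarith
  · refine (pi_norm_le_iff_of_nonneg (norm_nonneg _)).mpr fun i =>
      le_trans ?_ (norm_le_pi_norm _ i)
    have hi : |u' i| ≤ |u i + k * u' i| := calc
      |u' i| ≤ |k * u' i| := by
        rw [abs_mul]
        exact le_mul_of_one_le_left (abs_nonneg _) (hk.trans (le_abs_self k))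
      _ ≤ |u i + k * u' i| := abs_le_abs_add_of_mul_nonneg (hmul i)
    simpa [Int.norm_eq_abs] using (Int.cast_le (R := ℝ)).mpr hi

lemma of_abs_lt {i j : Fin 2} (hij : i ≠ j) (hi : x i ≠ 0) (hlt : |x i| < |x j|) :
    IsConvergentPair x (Pi.single i (SignType.sign (x i) : ℤ))
      (Pi.single j (SignType.sign (x j) : ℤ)) |x i| |x j| := by
  have hj : x j ≠ 0 := abs_pos.mp ((abs_nonneg _).trans_lt hlt)
  have hsign {t : ℝ} (ht : t ≠ 0) : |(SignType.sign t : ℤ)| = 1 := by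
    rcases ht.lt_or_gt with h | h <;> simp [h]
  refine ⟨?_, ?_, fun k => ?_, ?_, abs_pos.mpr hi, hlt⟩
  · ext k
    fin_cases i <;> fin_cases j <;> fin_cases k <;> simp_all
  · have : |(SignType.sign (x i) : ℤ) * (SignType.sign (x j) : ℤ)| = 1 := by
      rw [abs_mul, hsign hi, hsign hj, one_mul]
    fin_cases i <;> fin_cases j <;> simp_all [wedge]
  · rcases eq_or_ne k i with rfl | hk
    · simp [hij]
    · simp [hk]
  · rw [Pi.norm_single, Pi.norm_single, Int.norm_eq_abs, Int.norm_eq_abs, ← Int.cast_abs,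
      ← Int.cast_abs, hsign hi, hsign hj]

lemma exists_of_irrational (hx : Irrational (x 0 / x 1)) :
    ∃ u u' a b, IsConvergentPair x u u' a b := by
  have h0 : x 0 ≠ 0 := fun h => by simp [h] at hx
  have h1 : x 1 ≠ 0 := fun h => by simp [h] at hx
  have hne : |x 0| ≠ |x 1| := fun h => by
    rcases abs_eq_abs.mp h with h | h <;> simp [h, h1] at hx
  rcases hne.lt_or_gt with h | h
  · exact ⟨_, _, _, _, of_abs_lt (by decide) h0 h⟩
  · exact ⟨_, _, _, _, of_abs_lt (by decide) h1 h⟩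

end IsConvergentPair

lemma exists_seq_isConvergentPair {x : Fin 2 → ℝ} (hx : Irrational (x 0 / x 1)) :
    ∃ (u : ℕ → Fin 2 → ℤ) (r : ℕ → ℝ),
      ∀ n, IsConvergentPair x (u n) (u (n + 1)) (r (n + 1)) (r n) := by
  obtain ⟨u, u', a, b, h⟩ := IsConvergentPair.exists_of_irrational hx
  obtain ⟨f, hf⟩ := exists_seq_of_forall_exists_next
    (P := fun p q : (Fin 2 → ℤ) × ℝ => IsConvergentPair x p.1 q.1 q.2 p.2)
    (p := (u, b)) (q := (u', a)) h fun p q hpq =>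
      let ⟨u'', c, h'⟩ := hpq.exists_next hx
      ⟨(u'', c), h'⟩
  exact ⟨fun n => (f n).1, fun n => (f n).2, hf⟩

lemma tendsto_norm_of_isConvergentPair {x : Fin 2 → ℝ} {u : ℕ → Fin 2 → ℤ} {r : ℕ → ℝ}
    (h : ∀ n, IsConvergentPair x (u n) (u (n + 1)) (r (n + 1)) (r n)) :
    Tendsto (fun n => ‖u n‖) atTop atTop := by
  have hr : StrictAnti r := strictAnti_nat_of_succ_lt fun n => (h n).lt
  refine tendsto_norm_atTop_of_injective fun m n hmn => hr.injective ?_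
  rw [← (h m).abs_wedge_left, ← (h n).abs_wedge_left, hmn]

end Convergents

section Approximation

lemma exists_norm_eq_and_wedge_eq {v w : Fin 2 → ℤ} {d : ℤ} (h : |wedge v w| = |d|) :
    ∃ w', ‖w'‖ = ‖w‖ ∧ wedge v w' = d := by
  rcases abs_eq_abs.mp h with h | h
  · exact ⟨w, rfl, h⟩
  · exact ⟨-w, norm_neg w, by rw [wedge_neg_right, h, neg_neg]⟩

lemma exists_det_eq_one_and_act_eq {u u' v w : Fin 2 → ℤ} (hu : |wedge u u'| = 1)
    (huv : wedge v w = wedge u u') (a b : ℝ) (l : ℤ) :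
    ∃ γ : Matrix (Fin 2) (Fin 2) ℤ, γ.det = 1 ∧
      act γ (a • Int.cast ∘ u + b • Int.cast ∘ u') =
        (a + b * l) • Int.cast ∘ v + b • Int.cast ∘ w ∧
      mnorm γ ≤ ‖v‖ * ‖u'‖ + (|(l : ℝ)| * ‖v‖ + ‖w‖) * ‖u‖ := by
  obtain ⟨γ, hdet, hγu, hγu', hγ⟩ := exists_det_eq_one_and_mulVec_eq hu
    (show wedge v (w + l • v) = wedge u u' by rw [wedge_add_smul_right, huv])
  refine ⟨γ, hdet, ?_, hγ.trans ?_⟩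
  · rw [act_smul_add_smul, hγu, hγu']
    ext i
    simp only [Pi.add_apply, Pi.smul_apply, Function.comp_apply, smul_eq_mul, Int.cast_add,
      Int.cast_mul]
    ring
  · gcongr
    refine (norm_add_le _ _).trans ?_
    rw [add_comm]
    gcongr
    exact norm_smul_le l v

lemma IsConvergentPair.exists_det_eq_one_and_act_near {x : Fin 2 → ℝ} {u u' v w : Fin 2 → ℤ}
    {a b : ℝ} (h : IsConvergentPair x u u' a b) (hvw : |wedge v w| = 1) (hwv : ‖w‖ ≤ ‖v‖)
    (y : Fin 2 → ℝ) :
    ∃ γ : Matrix (Fin 2) (Fin 2) ℤ, γ.det = 1 ∧ act γ x ≠ y ∧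
      ‖act γ x - y‖ ≤ 2 * (b * ‖v‖) + |wedge y (Int.cast ∘ v)| / ‖v‖ ∧
      b * mnorm γ ≤ 4 * (b * ‖v‖ * ‖u'‖) + ‖y‖ * ‖u‖ := by
  have hb := h.pos_right
  obtain ⟨w, hw, hwedge⟩ := exists_norm_eq_and_wedge_eq (hvw.trans h.abs_wedge.symm)
  rw [← hw] at hwv
  have hne : wedge (Int.cast ∘ v : Fin 2 → ℝ) (Int.cast ∘ w) ≠ 0 := by
    rw [wedge_intCast_comp, hwedge, Int.cast_ne_zero]
    exact abs_pos.mp (by simp [h.abs_wedge])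
  obtain ⟨l, hl, hly, hle⟩ := exists_int_smul_add_smul_near (a := a) hb y hne
  obtain ⟨γ, hdet, hact, hγ⟩ := exists_det_eq_one_and_act_eq h.abs_wedge hwedge a b l
  rw [← h.eq_add] at hact
  rw [← hact] at hly hle
  rw [norm_intCast_comp] at hl hle
  rw [norm_intCast_comp] at hle
  have hv : 0 < ‖v‖ := norm_pos_iff.mpr fun hv => hne (by simp [hv, wedge])
  have hbl : b * |(l : ℝ)| ≤ 2 * b + ‖y‖ / ‖v‖ := by
    calc b * |(l : ℝ)| ≤ b * (1 + (‖y‖ / ‖v‖ + |a|) / b) := by gcongr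
      _ = b + ‖y‖ / ‖v‖ + a := by rw [abs_of_pos h.pos]; field_simp; ring
      _ ≤ 2 * b + ‖y‖ / ‖v‖ := by linarith [h.lt]
  refine ⟨γ, hdet, hly, hle.trans ?_, ?_⟩
  · have : b * ‖w‖ ≤ b * ‖v‖ := by gcongr
    linarith
  · calc b * mnorm γ ≤ b * (‖v‖ * ‖u'‖ + (|(l : ℝ)| * ‖v‖ + ‖v‖) * ‖u‖) := by
          refine mul_le_mul_of_nonneg_left (hγ.trans ?_) hb.le
          gcongr
      _ = b * ‖v‖ * ‖u'‖ + (b * |(l : ℝ)| + b) * ‖v‖ * ‖u‖ := by ring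
      _ ≤ b * ‖v‖ * ‖u'‖ + (2 * b + ‖y‖ / ‖v‖ + b) * ‖v‖ * ‖u‖ := by gcongr
      _ = b * ‖v‖ * ‖u'‖ + 3 * (b * ‖v‖ * ‖u‖) + ‖y‖ * ‖u‖ := by field_simp; ring
      _ ≤ b * ‖v‖ * ‖u'‖ + 3 * (b * ‖v‖ * ‖u'‖) + ‖y‖ * ‖u‖ := by
          gcongr
          exact h.norm_le
      _ = 4 * (b * ‖v‖ * ‖u'‖) + ‖y‖ * ‖u‖ := by ring

lemma cube_two_mul_add_mul_le {s t R K : ℝ} (hs : 0 ≤ s) (ht : 0 ≤ t) (hR : 0 ≤ R)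
    (hsK : s ^ 3 * R ≤ K) (htK : t ^ 3 * R ≤ K) : (2 * s + t) ^ 3 * R ≤ 27 * K := by
  have hmax : max s t ^ 3 * R ≤ K := by
    rcases max_choice s t with h | h <;> rw [h] <;> assumption
  calc (2 * s + t) ^ 3 * R ≤ (2 * max s t + max s t) ^ 3 * R := by
        gcongr
        exacts [le_max_left _ _, le_max_right _ _]
    _ = 27 * (max s t ^ 3 * R) := by ring
    _ ≤ 27 * K := by gcongr

lemma one_le_norm_of_ne_zero {ι : Type*} [Fintype ι] {u : ι → ℤ} (hu : u ≠ 0) : 1 ≤ ‖u‖ := by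
  obtain ⟨i, hi⟩ := Function.ne_iff.mp hu
  refine le_trans ?_ (norm_le_pi_norm u i)
  rw [Int.norm_eq_abs]
  exact_mod_cast Int.one_le_abs hi

lemma IsConvergentPair.cube_mul_le_left {x : Fin 2 → ℝ} {u u' : Fin 2 → ℤ} {a b S Y : ℝ}
    (h : IsConvergentPair x u u' a b) (hS : 0 ≤ S) (hSY : ‖x‖ * S ^ 3 ≤ Y * ‖u'‖) :
    (b * S) ^ 3 * (S ^ 3 * ‖u'‖) ≤ ‖x‖ * Y ^ 2 := by
  have hu' : 0 < ‖u'‖ := norm_pos_iff.mpr h.ne_zero_right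
  have hb := h.pos_right
  refine le_of_mul_le_mul_right ?_ (pow_pos hu' 2)
  calc (b * S) ^ 3 * (S ^ 3 * ‖u'‖) * ‖u'‖ ^ 2 = (b * ‖u'‖) ^ 3 * (S ^ 3) ^ 2 := by ring
    _ ≤ ‖x‖ ^ 3 * (S ^ 3) ^ 2 := by gcongr; exact h.mul_norm_le
    _ = ‖x‖ * (‖x‖ * S ^ 3) ^ 2 := by ring
    _ ≤ ‖x‖ * (Y * ‖u'‖) ^ 2 := by gcongr
    _ = ‖x‖ * Y ^ 2 * ‖u'‖ ^ 2 := by ring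

lemma IsConvergentPair.cube_mul_le_right {y : Fin 2 → ℝ} {v v' : Fin 2 → ℤ} {c d Q X : ℝ}
    (h : IsConvergentPair y v v' c d) (hX : 0 ≤ X) (hQX : ‖y‖ * Q ≤ X * ‖v'‖ ^ 3) :
    d ^ 3 * Q ≤ X * ‖y‖ ^ 2 := by
  have hd := h.pos_right
  have hy : 0 < ‖y‖ := (mul_pos hd (norm_pos_iff.mpr h.ne_zero_right)).trans_le h.mul_norm_le
  refine le_of_mul_le_mul_right ?_ hy
  calc d ^ 3 * Q * ‖y‖ = d ^ 3 * (‖y‖ * Q) := by ring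
    _ ≤ d ^ 3 * (X * ‖v'‖ ^ 3) := by gcongr
    _ = X * (d * ‖v'‖) ^ 3 := by ring
    _ ≤ X * ‖y‖ ^ 3 := by gcongr; exact h.mul_norm_le
    _ = X * ‖y‖ ^ 2 * ‖y‖ := by ring

lemma exists_act_near_of_interlaced {x y : Fin 2 → ℝ} {u u' v₀ v v' : Fin 2 → ℤ}
    {a b c d e : ℝ} (hx : IsConvergentPair x u u' a b) (hy₀ : IsConvergentPair y v₀ v d e)
    (hy : IsConvergentPair y v v' c d) (h₁ : ‖y‖ * ‖u‖ ≤ ‖x‖ * ‖v‖ ^ 3)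
    (h₂ : ‖x‖ * ‖v‖ ^ 3 ≤ ‖y‖ * ‖u'‖) (h₃ : ‖y‖ * ‖u'‖ ≤ ‖x‖ * ‖v'‖ ^ 3) :
    ∃ γ : Matrix (Fin 2) (Fin 2) ℤ, γ.det = 1 ∧ act γ x ≠ y ∧
      ‖act γ x - y‖ ^ 3 * (‖v‖ ^ 3 * ‖u'‖) ≤ 27 * (‖x‖ * ‖y‖ ^ 2) ∧
      mnorm γ ≤ 6 * (‖v‖ ^ 3 * ‖u'‖) := by
  have hwedge : |wedge v v₀| = 1 := by rw [wedge_comm, abs_neg, hy₀.abs_wedge]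
  obtain ⟨γ, hdet, hne, hle, hγ⟩ := hx.exists_det_eq_one_and_act_near hwedge hy₀.norm_le y
  rw [hy.abs_wedge_left] at hle
  have hv : 1 ≤ ‖v‖ := one_le_norm_of_ne_zero hy₀.ne_zero_right
  have hb := hx.pos_right
  have hd := hy.pos_right
  refine ⟨γ, hdet, hne, ?_, ?_⟩
  · have hs : (b * ‖v‖) ^ 3 * (‖v‖ ^ 3 * ‖u'‖) ≤ ‖x‖ * ‖y‖ ^ 2 :=
      hx.cube_mul_le_left (norm_nonneg v) h₂
    have ht : (d / ‖v‖) ^ 3 * (‖v‖ ^ 3 * ‖u'‖) ≤ ‖x‖ * ‖y‖ ^ 2 := by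
      convert hy.cube_mul_le_right (norm_nonneg x) h₃ using 1
      field_simp
    calc ‖act γ x - y‖ ^ 3 * (‖v‖ ^ 3 * ‖u'‖)
        ≤ (2 * (b * ‖v‖) + d / ‖v‖) ^ 3 * (‖v‖ ^ 3 * ‖u'‖) := by gcongr
      _ ≤ 27 * (‖x‖ * ‖y‖ ^ 2) :=
        cube_two_mul_add_mul_le (by positivity) (by positivity) (by positivity) hs ht
  · have hyu : ‖y‖ * ‖u‖ ≤ 2 * (b * ‖u'‖) * ‖v‖ ^ 3 :=
      h₁.trans (mul_le_mul_of_nonneg_right hx.norm_le_two_mul (by positivity))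
    refine le_of_mul_le_mul_left ?_ hb
    calc b * mnorm γ ≤ 4 * (b * ‖v‖ * ‖u'‖) + ‖y‖ * ‖u‖ := hγ
      _ ≤ 4 * (b * ‖v‖ ^ 3 * ‖u'‖) + 2 * (b * ‖u'‖) * ‖v‖ ^ 3 := by
          gcongr
          exact le_self_pow₀ hv three_ne_zero
      _ = b * (6 * (‖v‖ ^ 3 * ‖u'‖)) := by ring

lemma exists_act_near_of_irrational {x y : Fin 2 → ℝ} (hx : Irrational (x 0 / x 1))
    (hy : Irrational (y 0 / y 1)) {ε : ℝ} (hε : 0 < ε) :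
    ∃ γ : Matrix (Fin 2) (Fin 2) ℤ, γ.det = 1 ∧ 0 < ‖act γ x - y‖ ∧ ‖act γ x - y‖ < ε ∧
      ‖act γ x - y‖ ^ 3 * mnorm γ ≤ 162 * (‖x‖ * ‖y‖ ^ 2) := by
  obtain ⟨u, r, hu⟩ := exists_seq_isConvergentPair hx
  obtain ⟨v, s, hv⟩ := exists_seq_isConvergentPair hy
  have hx0 : 0 < ‖x‖ := norm_pos_iff.mpr fun h => by simp [h] at hx
  have hy0 : 0 < ‖y‖ := norm_pos_iff.mpr fun h => by simp [h] at hy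
  have hf : Tendsto (fun m => ‖y‖ * ‖u m‖) atTop atTop :=
    (tendsto_norm_of_isConvergentPair hu).const_mul_atTop hy0
  have hg : Tendsto (fun n => ‖x‖ * ‖v (n + 1)‖ ^ 3) atTop atTop :=
    ((tendsto_pow_atTop three_ne_zero).comp ((tendsto_norm_of_isConvergentPair hv).comp
      (tendsto_add_atTop_nat 1))).const_mul_atTop hx0
  have hg' : Monotone fun n => ‖x‖ * ‖v (n + 1)‖ ^ 3 := monotone_nat_of_le_succ fun n => by
    gcongr
    exact (hv (n + 1)).norm_le
  obtain ⟨m, n, h₁, h₂, h₃, hB⟩ := exists_interlaced_index hf hg hg'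
    (‖y‖ * (27 * (‖x‖ * ‖y‖ ^ 2) / ε ^ 3 + 1))
  obtain ⟨γ, hdet, hne, hE, hγ⟩ := exists_act_near_of_interlaced (hu m) (hv n) (hv (n + 1)) h₁ h₂ h₃
  refine ⟨γ, hdet, norm_sub_pos_iff.mpr hne, ?_, ?_⟩
  · have hlt : 27 * (‖x‖ * ‖y‖ ^ 2) < ε ^ 3 * ‖u (m + 1)‖ :=
      (div_lt_iff₀' (by positivity)).mp ((lt_add_one _).trans_le (le_of_mul_le_mul_left hB hy0))
    have hv1 : 1 ≤ ‖v (n + 1)‖ := one_le_norm_of_ne_zero (hv n).ne_zero_right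
    have hR : ‖u (m + 1)‖ ≤ ‖v (n + 1)‖ ^ 3 * ‖u (m + 1)‖ :=
      le_mul_of_one_le_left (norm_nonneg _) (one_le_pow₀ hv1)
    by_contra! hge
    refine (hE.trans_lt hlt).not_ge ?_
    gcongr
  · calc ‖act γ x - y‖ ^ 3 * mnorm γ
        ≤ ‖act γ x - y‖ ^ 3 * (6 * (‖v (n + 1)‖ ^ 3 * ‖u (m + 1)‖)) := by gcongr
      _ ≤ 162 * (‖x‖ * ‖y‖ ^ 2) := by linarith

lemma le_mul_rpow_div_rpow_of_pow_three_mul_le {C E G X Y : ℝ} (hC : 0 ≤ C) (hG : 0 < G)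
    (hX : 0 ≤ X) (hY : 0 ≤ Y) (h : E ^ 3 * G ≤ C ^ 3 * (X * Y ^ 2)) :
    E ≤ C * X ^ ((1 : ℝ) / 3) * Y ^ ((2 : ℝ) / 3) / G ^ ((1 : ℝ) / 3) := by
  have hcube {t : ℝ} (ht : 0 ≤ t) : (t ^ ((1 : ℝ) / 3)) ^ 3 = t := by
    rw [← Real.rpow_mul_natCast ht]
    norm_num
  have hcube' : (Y ^ ((2 : ℝ) / 3)) ^ 3 = Y ^ 2 := by
    rw [← Real.rpow_mul_natCast hY]
    norm_num
  rw [le_div_iff₀ (by positivity)]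
  refine le_of_pow_le_pow_left₀ three_ne_zero (by positivity) ?_
  rwa [mul_pow, mul_pow, mul_pow, hcube hG.le, hcube hX, hcube', mul_assoc]

end Approximation

/-- approximation to a point `y` of irrational slope: infinitely many
`γ ∈ SL(2, ℤ)` with `|γ x - y| ≤ 7√5 |x|^{1/3} |y|^{2/3} / |γ|^{1/3}`. -/
theorem stmt6 (x y : Fin 2 → ℝ) (hx2 : x 1 ≠ 0) (hξ : Irrational (x 0 / x 1))
    (hy2 : y 1 ≠ 0) (hy : Irrational (y 0 / y 1)) :
    {γ : Matrix (Fin 2) (Fin 2) ℤ | γ.det = 1 ∧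
      vnorm (act γ x - y) ≤ 7 * Real.sqrt 5 * vnorm x ^ ((1 : ℝ) / 3) *
        vnorm y ^ ((2 : ℝ) / 3) / mnorm γ ^ ((1 : ℝ) / 3)}.Infinite := by
  refine infinite_of_forall_exists_pos_lt (fun γ => ‖act γ x - y‖) fun ε hε => ?_
  obtain ⟨γ, hdet, hpos, hlt, hle⟩ := exists_act_near_of_irrational hξ hy hε
  have hγ : 0 < mnorm γ := mnorm_pos fun h => by simp [h] at hdet
  have hC : (162 : ℝ) ≤ (7 * √5) ^ 3 := calc
    (162 : ℝ) ≤ (7 * 1) ^ 3 := by norm_num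
    _ ≤ (7 * √5) ^ 3 := by
      gcongr
      exact Real.one_le_sqrt.mpr (by norm_num)
  refine ⟨γ, ⟨hdet, ?_⟩, hpos, hlt⟩
  simp only [vnorm_eq_norm]
  exact le_mul_rpow_div_rpow_of_pow_three_mul_le (by positivity) hγ (norm_nonneg x)
    (norm_nonneg y) (hle.trans (by gcongr))
end

section
/- Let x ∈ ℝ² have irrational slope ξ and y ∈ ℝ² have irrational slope y₁/y₂. Then μ(x,y) ≥ 1/3 and μ̂(x,y) ≥ (ω(y)+1)/(2(2ω(y)+1)ω(ξ)) ≥ 1/(4ω(ξ)), where y = y₁/y₂. -/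
open Matrix MeasureTheory

/-!
Let `M` and `N` in `SL(2, ℤ)` be made of two consecutive convergents of the slopes of `x` and `y`.
Write `q` and `s` for the larger denominators in `M` and `N`, and `Q` and `S` for the denominators
that follow them. Then `M⁻¹` maps `x` to a vector with first entry of order `1 / q` and second entry
of order `1 / Q`, a shear `U` brings it within `O(1 / Q)` of any given point of the first axis, and
`N` maps the first axis to a line close to the one through `y`. Hence `γ = N U M⁻¹` satisfies
`|γ x - y| ≪ s / Q + 1 / (s S)` and `|γ| ≪ Q (q + s)`.

If `q ≤ s ^ 3 ≤ Q < S ^ 3`, which happens for arbitrarily large `q`, the error is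
`≪ (Q s ^ 3) ^ (-1 / 3)` and `|γ| ≪ Q s ^ 3`. For the uniform exponent, choose `Q` with
`Q ^ 2 ≤ T < R ^ 2`, where `R` is the denominator after `Q`, and `s` with `s₀ s ^ 2 ≤ Q < s S ^ 2`,
where `s₀` is the denominator before `s`. The irrationality measures bound `R`, `s` and `S` by
powers of `Q`, `s₀` and `s`.
-/

open Filter

section Convergents

variable {ξ : ℝ}

lemma not_terminatedAt_of_irrational (hξ : Irrational ξ) (k : ℕ) :
    ¬(GenContFract.of ξ).TerminatedAt k := fun h => by
  obtain ⟨r, hr⟩ := (GenContFract.terminates_iff_rat ξ).1 ⟨k, h⟩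
  exact hξ.ne_rat r hr

lemma exists_int_get?_eq_some (hξ : Irrational ξ) (k : ℕ) :
    ∃ a : ℤ, 1 ≤ a ∧ (GenContFract.of ξ).s.get? k = some ⟨1, a⟩ := by
  obtain ⟨gp, hgp⟩ := Option.ne_none_iff_exists'.1 (not_terminatedAt_of_irrational hξ k)
  obtain ⟨hnum, a, hden⟩ := GenContFract.of_partNum_eq_one_and_exists_int_partDen_eq hgp
  have one_le : 1 ≤ gp.b :=
    GenContFract.of_one_le_get?_partDen (GenContFract.partDen_eq_s_b hgp)
  refine ⟨a, by exact_mod_cast hden ▸ one_le, ?_⟩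
  rw [hgp, ← hnum, ← hden]

lemma exists_qden_pnum_add_two_eq (hξ : Irrational ξ) (k : ℕ) :
    ∃ a : ℤ, 1 ≤ a ∧ qden ξ (k + 2) = a * qden ξ (k + 1) + qden ξ k ∧
      pnum ξ (k + 2) = a * pnum ξ (k + 1) + pnum ξ k := by
  obtain ⟨a, ha, hget⟩ := exists_int_get?_eq_some hξ (k + 1)
  refine ⟨a, ha, ?_, ?_⟩
  · simpa only [qden, one_mul] using GenContFract.dens_recurrence hget rfl rfl
  · simpa only [pnum, one_mul] using GenContFract.nums_recurrence hget rfl rfl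

lemma exists_int_eq_qden_and_pnum (hξ : Irrational ξ) (k : ℕ) :
    ∃ q p : ℤ, qden ξ k = q ∧ pnum ξ k = p := by
  induction k using Nat.twoStepInduction with
  | zero =>
    refine ⟨1, ⌊ξ⌋, ?_, ?_⟩
    · rw [qden, GenContFract.zeroth_den_eq_one, Int.cast_one]
    · rw [pnum, GenContFract.zeroth_num_eq_h, GenContFract.of_h_eq_floor]
  | one =>
    obtain ⟨a, -, hget⟩ := exists_int_get?_eq_some hξ 0
    refine ⟨a, a * ⌊ξ⌋ + 1, GenContFract.first_den_eq hget, ?_⟩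
    rw [pnum, GenContFract.first_num_eq hget, GenContFract.of_h_eq_floor]
    push_cast
    rfl
  | more k ih ih' =>
    obtain ⟨q, p, hq, hp⟩ := ih
    obtain ⟨q', p', hq', hp'⟩ := ih'
    obtain ⟨a, -, hqden, hpnum⟩ := exists_qden_pnum_add_two_eq hξ k
    refine ⟨a * q' + q, a * p' + p, ?_, ?_⟩
    · rw [hqden, hq, hq']; push_cast; rfl
    · rw [hpnum, hp, hp']; push_cast; rfl

lemma floor_qden_cast (hξ : Irrational ξ) (k : ℕ) : (⌊qden ξ k⌋ : ℝ) = qden ξ k := by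
  obtain ⟨q, -, hq, -⟩ := exists_int_eq_qden_and_pnum hξ k
  rw [hq, Int.floor_intCast]

lemma floor_pnum_cast (hξ : Irrational ξ) (k : ℕ) : (⌊pnum ξ k⌋ : ℝ) = pnum ξ k := by
  obtain ⟨-, p, -, hp⟩ := exists_int_eq_qden_and_pnum hξ k
  rw [hp, Int.floor_intCast]

lemma fib_succ_le_qden (hξ : Irrational ξ) (k : ℕ) : (Nat.fib (k + 1) : ℝ) ≤ qden ξ k :=
  GenContFract.succ_nth_fib_le_of_nth_den (.inr (not_terminatedAt_of_irrational hξ _))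

lemma one_le_qden (hξ : Irrational ξ) (k : ℕ) : 1 ≤ qden ξ k :=
  le_trans (by exact_mod_cast Nat.fib_pos.2 k.succ_pos) (fib_succ_le_qden hξ k)

lemma qden_pos (hξ : Irrational ξ) (k : ℕ) : 0 < qden ξ k :=
  one_pos.trans_le (one_le_qden hξ k)

lemma monotone_qden (ξ : ℝ) : Monotone (qden ξ) :=
  monotone_nat_of_le_succ fun _ => GenContFract.of_den_mono

lemma tendsto_qden_atTop (hξ : Irrational ξ) : Tendsto (qden ξ) atTop atTop := by
  rw [← tendsto_add_atTop_iff_nat 1]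
  exact tendsto_atTop_mono (fun k => fib_succ_le_qden hξ (k + 1))
    (tendsto_natCast_atTop_atTop.comp Nat.fib_add_two_strictMono.tendsto_atTop)

lemma two_mul_qden_le_qden_add_two (hξ : Irrational ξ) (k : ℕ) :
    2 * qden ξ k ≤ qden ξ (k + 2) := by
  obtain ⟨a, ha, hqden, -⟩ := exists_qden_pnum_add_two_eq hξ k
  have ha' : (1 : ℝ) ≤ a := by exact_mod_cast ha
  have := le_mul_of_one_le_left (qden_pos hξ (k + 1)).le ha'
  linarith [monotone_qden ξ k.le_succ]

lemma pnum_mul_qden_sub_eq (hξ : Irrational ξ) (k : ℕ) :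
    pnum ξ (k + 1) * qden ξ k - pnum ξ k * qden ξ (k + 1) = (-1) ^ k := by
  have hdet : pnum ξ k * qden ξ (k + 1) - qden ξ k * pnum ξ (k + 1) = (-1) ^ (k + 1) :=
    SimpContFract.determinant (s := SimpContFract.of ξ) (not_terminatedAt_of_irrational hξ k)
  linear_combination -hdet

lemma abs_qden_mul_sub_pnum_le (hξ : Irrational ξ) (k : ℕ) :
    |qden ξ k * ξ - pnum ξ k| ≤ 1 / qden ξ (k + 1) := by
  have hq := qden_pos hξ k
  have happrox : |ξ - pnum ξ k / qden ξ k| ≤ 1 / (qden ξ k * qden ξ (k + 1)) :=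
    GenContFract.abs_sub_convs_le (not_terminatedAt_of_irrational hξ k)
  calc |qden ξ k * ξ - pnum ξ k| = qden ξ k * |ξ - pnum ξ k / qden ξ k| := by
        rw [← abs_of_pos hq, ← abs_mul, abs_of_pos hq, mul_sub, mul_div_cancel₀ _ hq.ne']
    _ ≤ qden ξ k * (1 / (qden ξ k * qden ξ (k + 1))) := by gcongr
    _ = 1 / qden ξ (k + 1) := by field_simp

lemma abs_qden_mul_sub_pnum_le_one (hξ : Irrational ξ) (k : ℕ) :
    |qden ξ k * ξ - pnum ξ k| ≤ 1 :=
  (abs_qden_mul_sub_pnum_le hξ k).trans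
    ((div_le_one (qden_pos hξ _)).2 (one_le_qden hξ _))

lemma one_div_le_abs_qden_mul_sub_pnum (hξ : Irrational ξ) (k : ℕ) :
    1 / (2 * qden ξ (k + 1)) ≤ |qden ξ k * ξ - pnum ξ k| := by
  have hq := qden_pos hξ k
  have hq' := qden_pos hξ (k + 1)
  have hq'' := qden_pos hξ (k + 2)
  set e := qden ξ k * ξ - pnum ξ k with he
  set e' := qden ξ (k + 1) * ξ - pnum ξ (k + 1) with he'
  have hdet : |qden ξ (k + 1) * e - qden ξ k * e'| = 1 := by
    rw [show qden ξ (k + 1) * e - qden ξ k * e' = (-1) ^ k by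
      rw [he, he', ← pnum_mul_qden_sub_eq hξ k]; ring, abs_neg_one_pow]
  have hhalf : qden ξ k * |e'| ≤ 1 / 2 := by
    calc qden ξ k * |e'| ≤ qden ξ k * (1 / qden ξ (k + 2)) := by
          gcongr
          exact abs_qden_mul_sub_pnum_le hξ (k + 1)
      _ ≤ 1 / 2 := by
          rw [mul_one_div, div_le_div_iff₀ hq'' two_pos]
          linarith [two_mul_qden_le_qden_add_two hξ k]
  have htri := abs_sub (qden ξ (k + 1) * e) (qden ξ k * e')
  rw [hdet, abs_mul, abs_mul, abs_of_pos hq, abs_of_pos hq'] at htri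
  rw [div_le_iff₀ (by positivity)]
  linarith

lemma abs_pnum_le (hξ : Irrational ξ) (k : ℕ) : |pnum ξ k| ≤ (1 + |ξ|) * qden ξ k := by
  have hq := one_le_qden hξ k
  calc |pnum ξ k| = |qden ξ k * ξ - (qden ξ k * ξ - pnum ξ k)| := by rw [sub_sub_cancel]
    _ ≤ |qden ξ k * ξ| + |qden ξ k * ξ - pnum ξ k| := abs_sub _ _
    _ ≤ qden ξ k * |ξ| + qden ξ k := by
        rw [abs_mul, abs_of_pos (qden_pos hξ k)]
        gcongr
        exact (abs_qden_mul_sub_pnum_le_one hξ k).trans hq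
    _ = (1 + |ξ|) * qden ξ k := by ring

end Convergents

section IrrationalityMeasure

variable {α w : ℝ}

lemma mem_omegaSet_of_frequently (hα : Irrational α)
    (h : ∃ᶠ k in atTop, qden α k ^ w ≤ qden α (k + 1)) : w ∈ omegaSet α := by
  have hcofinite : Tendsto (fun k => ((⌊qden α k⌋, -⌊pnum α k⌋) : ℤ × ℤ)) atTop cofinite := by
    refine le_cofinite_iff_eventually_ne.2 fun z => eventually_map.2 ?_
    filter_upwards [(tendsto_qden_atTop hα).eventually_gt_atTop (z.1 : ℝ)] with k hk hz
    rw [← hz, floor_qden_cast hα] at hk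
    exact hk.false
  refine frequently_cofinite_iff_infinite.1 (hcofinite.frequently (h.mono fun k hk => ?_))
  have hq := qden_pos hα k
  simp only [Int.cast_neg, floor_qden_cast hα, floor_pnum_cast hα, ← sub_eq_add_neg]
  calc |qden α k * α - pnum α k| ≤ 1 / qden α (k + 1) := abs_qden_mul_sub_pnum_le hα k
    _ ≤ 1 / qden α k ^ w := by gcongr
    _ = |qden α k| ^ (-w) := by rw [abs_of_pos hq, Real.rpow_neg hq.le, one_div]

lemma one_mem_omegaSet (hα : Irrational α) : 1 ∈ omegaSet α :=
  mem_omegaSet_of_frequently hα <| .of_forall fun k => by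
    rw [Real.rpow_one]
    exact monotone_qden α k.le_succ

lemma eventually_qden_succ_lt_rpow (hα : Irrational α) (hw : w ∉ omegaSet α) :
    ∀ᶠ k in atTop, qden α (k + 1) < qden α k ^ w := by
  simpa only [not_frequently, not_le] using mt (mem_omegaSet_of_frequently hα) hw

end IrrationalityMeasure

section Norms

lemma mnorm_le_iff {g : Matrix (Fin 2) (Fin 2) ℤ} {C : ℝ} :
    mnorm g ≤ C ↔ ∀ i j, |(g i j : ℝ)| ≤ C := by
  simp only [mnorm, max_le_iff, Fin.forall_fin_two]

lemma abs_apply_le_mnorm (g : Matrix (Fin 2) (Fin 2) ℤ) (i j : Fin 2) :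
    |(g i j : ℝ)| ≤ mnorm g :=
  mnorm_le_iff.1 le_rfl i j

lemma mnorm_nonneg (g : Matrix (Fin 2) (Fin 2) ℤ) : 0 ≤ mnorm g :=
  (abs_nonneg _).trans (abs_apply_le_mnorm g 0 0)

lemma mnorm_mul_le (g h : Matrix (Fin 2) (Fin 2) ℤ) :
    mnorm (g * h) ≤ 2 * mnorm g * mnorm h := by
  refine mnorm_le_iff.2 fun i j => ?_
  have hterm (k : Fin 2) : |(g i k : ℝ) * h k j| ≤ mnorm g * mnorm h := by
    rw [abs_mul]
    exact mul_le_mul (abs_apply_le_mnorm g i k) (abs_apply_le_mnorm h k j) (abs_nonneg _)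
      (mnorm_nonneg g)
  rw [Matrix.mul_apply, Fin.sum_univ_two]
  push_cast
  linarith [abs_add_le ((g i 0 : ℝ) * h 0 j) (g i 1 * h 1 j), hterm 0, hterm 1]

lemma mnorm_adjugate (g : Matrix (Fin 2) (Fin 2) ℤ) : mnorm g.adjugate = mnorm g := by
  refine eq_of_forall_ge_iff fun C => ?_
  simp only [mnorm_le_iff, Matrix.adjugate_fin_two, Fin.forall_fin_two, Matrix.of_apply,
    Matrix.cons_val_zero, Matrix.cons_val_one, Int.cast_neg, abs_neg]
  tauto

lemma mnorm_shear_le (l : ℤ) : mnorm !![1, l; 0, 1] ≤ 1 + |(l : ℝ)| := by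
  have hl := abs_nonneg (l : ℝ)
  simp only [mnorm_le_iff, Fin.forall_fin_two, Matrix.of_apply, Matrix.cons_val_zero,
    Matrix.cons_val_one, Int.cast_one, Int.cast_zero, abs_one, abs_zero]
  refine ⟨⟨?_, ?_⟩, ?_, ?_⟩ <;> linarith

lemma one_le_mnorm {g : Matrix (Fin 2) (Fin 2) ℤ} (hg : g ≠ 0) : 1 ≤ mnorm g := by
  obtain ⟨i, j, hij⟩ : ∃ i j, g i j ≠ 0 := by
    by_contra! h
    exact hg (Matrix.ext h)
  refine le_trans ?_ (abs_apply_le_mnorm g i j)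
  exact_mod_cast Int.one_le_abs hij

lemma vnorm_sub_pos {u v : Fin 2 → ℝ} : 0 < vnorm (u - v) ↔ u ≠ v := by
  rw [vnorm_eq_norm, norm_sub_pos_iff]

lemma act_apply (g : Matrix (Fin 2) (Fin 2) ℤ) (x : Fin 2 → ℝ) (i : Fin 2) :
    act g x i = g i 0 * x 0 + g i 1 * x 1 := by
  rw [act, Matrix.mulVec, dotProduct, Fin.sum_univ_two, Matrix.map_apply, Matrix.map_apply]

lemma act_mul (g h : Matrix (Fin 2) (Fin 2) ℤ) (x : Fin 2 → ℝ) :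
    act (g * h) x = act g (act h x) := by
  have hmap : (g * h).map (Int.cast : ℤ → ℝ) = g.map Int.cast * h.map Int.cast :=
    Matrix.map_mul (f := Int.castRingHom ℝ)
  rw [act, act, act, Matrix.mulVec_mulVec, hmap]

end Norms

section Approximation

lemma exists_int_abs_add_mul_sub_le_and_ne {b : ℝ} (hb : b ≠ 0) (a c d : ℝ) :
    ∃ l : ℤ, |a + l * b - c| ≤ |b| ∧ a + l * b ≠ d := by
  have hscale (l : ℤ) (hl : |l - (c - a) / b| ≤ 1) : |a + l * b - c| ≤ |b| := by
    rw [show a + l * b - c = (l - (c - a) / b) * b by field_simp; ring, abs_mul]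
    exact mul_le_of_le_one_left (abs_nonneg _) hl
  have hfloor := Int.floor_le ((c - a) / b)
  have hfloor' := Int.lt_floor_add_one ((c - a) / b)
  by_cases h : a + ⌊(c - a) / b⌋ * b = d
  · refine ⟨⌊(c - a) / b⌋ + 1, hscale _ ?_, fun h' => hb ?_⟩
    · push_cast
      rw [abs_le]
      constructor <;> linarith
    · push_cast at h'
      linarith
  · refine ⟨⌊(c - a) / b⌋, hscale _ ?_, h⟩
    rw [abs_le]
    constructor <;> linarith

lemma vnorm_act_sub_le {N : Matrix (Fin 2) (Fin 2) ℤ} (hN : N 1 0 ≠ 0) {v : Fin 2 → ℝ}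
    (y : Fin 2 → ℝ) {ε : ℝ} (h₀ : |v 0 - y 1 / N 1 0| ≤ ε) (h₁ : |v 1| ≤ ε) :
    vnorm (act N v - y) ≤
      2 * ε * mnorm N + |N 1 0 * y 0 - N 0 0 * y 1| / |(N 1 0 : ℝ)| := by
  have hN' : (N 1 0 : ℝ) ≠ 0 := by exact_mod_cast hN
  have hmain (i : Fin 2) :
      |(v 0 - y 1 / N 1 0) * N i 0 + v 1 * N i 1| ≤ 2 * ε * mnorm N := by
    calc _ ≤ |v 0 - y 1 / N 1 0| * |(N i 0 : ℝ)| + |v 1| * |(N i 1 : ℝ)| := by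
          simpa only [abs_mul] using
            abs_add_le ((v 0 - y 1 / N 1 0) * N i 0) (v 1 * N i 1)
      _ ≤ ε * mnorm N + ε * mnorm N := by
          have hε := (abs_nonneg _).trans h₁
          gcongr <;> exact abs_apply_le_mnorm N i _
      _ = 2 * ε * mnorm N := by ring
  refine max_le ?_ ?_
  · have hsplit : (act N v - y) 0 = (v 0 - y 1 / N 1 0) * N 0 0 + v 1 * N 0 1 -
        (N 1 0 * y 0 - N 0 0 * y 1) / N 1 0 := by
      rw [Pi.sub_apply, act_apply]
      field_simp
      ring
    rw [hsplit, ← abs_div]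
    exact (abs_sub _ _).trans (by gcongr; exact hmain 0)
  · have hsplit : (act N v - y) 1 = (v 0 - y 1 / N 1 0) * N 1 0 + v 1 * N 1 1 := by
      rw [Pi.sub_apply, act_apply]
      field_simp
      ring
    rw [hsplit]
    exact (hmain 1).trans (le_add_of_nonneg_right (by positivity))

lemma exists_det_eq_one_vnorm_act_sub_le (x y : Fin 2 → ℝ) {M N : Matrix (Fin 2) (Fin 2) ℤ}
    (hM : M.det = 1) (hN : N.det = 1) (hN₀ : N 1 0 ≠ 0) (hMx : act M x 1 ≠ 0) :
    ∃ γ : Matrix (Fin 2) (Fin 2) ℤ, γ.det = 1 ∧ act γ x ≠ y ∧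
      vnorm (act γ x - y) ≤ 2 * |act M x 1| * mnorm N +
        |N 1 0 * y 0 - N 0 0 * y 1| / |(N 1 0 : ℝ)| ∧
      mnorm γ ≤
        4 * mnorm N * mnorm M * (2 + (|act M x 0| + |y 1 / N 1 0|) / |act M x 1|) := by
  have hN_nonneg := mnorm_nonneg N
  have hM_nonneg := mnorm_nonneg M
  set v := act M x with hv
  -- `N` sends `(y 1 / N 1 0, 0)` to `y`, up to the error made by replacing `y 0 / y 1` by
  -- `N 0 0 / N 1 0`; a shear moves `v` to within `|v 1|` of that point.
  obtain ⟨l, hl, hne⟩ :=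
    exists_int_abs_add_mul_sub_le_and_ne hMx (v 0) (y 1 / N 1 0) (act N.adjugate y 0)
  set U : Matrix (Fin 2) (Fin 2) ℤ := !![1, l; 0, 1] with hU
  have hUv₀ : act U v 0 = v 0 + l * v 1 := by simp [act_apply, hU]
  have hUv₁ : act U v 1 = v 1 := by simp [act_apply, hU]
  refine ⟨N * (U * M), ?_, fun h => hne ?_, ?_, ?_⟩
  · rw [Matrix.det_mul, Matrix.det_mul, hM, hN, hU, Matrix.det_fin_two_of]
    norm_num
  · rw [← hUv₀, ← act_mul, ← h, ← act_mul, ← Matrix.mul_assoc, Matrix.adjugate_mul, hN,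
      one_smul, Matrix.one_mul]
  · rw [act_mul, act_mul]
    exact vnorm_act_sub_le hN₀ y (by rwa [← hv, hUv₀]) (by rw [← hv, hUv₁])
  · have hlv : |(l : ℝ)| ≤ 1 + (|v 0| + |y 1 / N 1 0|) / |v 1| := by
      rw [← sub_le_iff_le_add', le_div_iff₀ (abs_pos.2 hMx), sub_mul, one_mul, ← abs_mul,
        sub_le_iff_le_add]
      calc |l * v 1| = |(v 0 + l * v 1 - y 1 / N 1 0) - v 0 + y 1 / N 1 0| := by
            congr 1; ring
        _ ≤ |v 0 + l * v 1 - y 1 / N 1 0| + |v 0| + |y 1 / N 1 0| :=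
            (abs_add_le _ _).trans (by gcongr; exact abs_sub _ _)
        _ ≤ |v 0| + |y 1 / N 1 0| + |v 1| := by linarith
    calc mnorm (N * (U * M)) ≤ 2 * mnorm N * mnorm (U * M) := mnorm_mul_le _ _
      _ ≤ 2 * mnorm N * (2 * (1 + |(l : ℝ)|) * mnorm M) := by
          gcongr
          exact (mnorm_mul_le U M).trans (by gcongr; exact mnorm_shear_le l)
      _ = 4 * mnorm N * mnorm M * (1 + |(l : ℝ)|) := by ring
      _ ≤ _ := mul_le_mul_of_nonneg_left (by linarith) (by positivity)

end Approximation

section ConvergentMatrix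

/-- The matrix in `SL(2, ℤ)` whose columns are, up to sign, the `(k + 1)`-st and `k`-th convergents
of an irrational number `ξ`. The floors only serve to turn the real numbers `pnum ξ k` and
`qden ξ k`, which are integers, into elements of `ℤ`; the sign makes the determinant `1`. -/
noncomputable def convMatrix (ξ : ℝ) (k : ℕ) : Matrix (Fin 2) (Fin 2) ℤ :=
  !![⌊pnum ξ (k + 1)⌋, (-1) ^ k * ⌊pnum ξ k⌋; ⌊qden ξ (k + 1)⌋, (-1) ^ k * ⌊qden ξ k⌋]

variable {ξ : ℝ}

lemma det_convMatrix (hξ : Irrational ξ) (k : ℕ) : (convMatrix ξ k).det = 1 := by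
  have hdet : ⌊pnum ξ (k + 1)⌋ * ⌊qden ξ k⌋ - ⌊pnum ξ k⌋ * ⌊qden ξ (k + 1)⌋ = (-1) ^ k := by
    rw [← Int.cast_inj (α := ℝ)]
    push_cast
    simp only [floor_qden_cast hξ, floor_pnum_cast hξ, pnum_mul_qden_sub_eq hξ k]
  have hsq : (-1 : ℤ) ^ k * (-1) ^ k = 1 := by rw [← mul_pow, neg_one_mul, neg_neg, one_pow]
  rw [convMatrix, Matrix.det_fin_two_of]
  linear_combination (-1) ^ k * hdet + hsq

lemma convMatrix_zero_zero (hξ : Irrational ξ) (k : ℕ) :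
    (convMatrix ξ k 0 0 : ℝ) = pnum ξ (k + 1) :=
  floor_pnum_cast hξ (k + 1)

lemma convMatrix_one_zero (hξ : Irrational ξ) (k : ℕ) :
    (convMatrix ξ k 1 0 : ℝ) = qden ξ (k + 1) :=
  floor_qden_cast hξ (k + 1)

lemma convMatrix_zero_one (hξ : Irrational ξ) (k : ℕ) :
    (convMatrix ξ k 0 1 : ℝ) = (-1) ^ k * pnum ξ k := by
  rw [← floor_pnum_cast hξ]
  exact_mod_cast rfl

lemma convMatrix_one_one (hξ : Irrational ξ) (k : ℕ) :
    (convMatrix ξ k 1 1 : ℝ) = (-1) ^ k * qden ξ k := by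
  rw [← floor_qden_cast hξ]
  exact_mod_cast rfl

lemma mnorm_convMatrix_le (hξ : Irrational ξ) (k : ℕ) :
    mnorm (convMatrix ξ k) ≤ (1 + |ξ|) * qden ξ (k + 1) := by
  have hmono : (1 + |ξ|) * qden ξ k ≤ (1 + |ξ|) * qden ξ (k + 1) := by
    gcongr
    exact monotone_qden ξ k.le_succ
  have hqden (k : ℕ) : |qden ξ k| ≤ (1 + |ξ|) * qden ξ k := by
    have hq := qden_pos hξ k
    rw [abs_of_pos hq]
    exact le_mul_of_one_le_left hq.le (le_add_of_nonneg_right (abs_nonneg ξ))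
  simp only [mnorm_le_iff, Fin.forall_fin_two, convMatrix_zero_zero hξ, convMatrix_zero_one hξ,
    convMatrix_one_zero hξ, convMatrix_one_one hξ, abs_mul, abs_neg_one_pow, one_mul]
  exact ⟨⟨abs_pnum_le hξ _, (abs_pnum_le hξ _).trans hmono⟩, hqden _, (hqden _).trans hmono⟩

variable {x : Fin 2 → ℝ}

lemma abs_act_adjugate_convMatrix_zero (hξ : Irrational ξ) (hx : x 0 = ξ * x 1) (k : ℕ) :
    |act (convMatrix ξ k).adjugate x 0| = |qden ξ k * ξ - pnum ξ k| * |x 1| := by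
  have hact : act (convMatrix ξ k).adjugate x 0 =
      (-1) ^ k * ((qden ξ k * ξ - pnum ξ k) * x 1) := by
    simp only [act_apply, Matrix.adjugate_fin_two, Matrix.of_apply, Matrix.cons_val_zero,
      Matrix.cons_val_one, Int.cast_neg, convMatrix_zero_one hξ, convMatrix_one_one hξ, hx]
    ring
  rw [hact, abs_mul, abs_neg_one_pow, one_mul, abs_mul]

lemma abs_act_adjugate_convMatrix_one (hξ : Irrational ξ) (hx : x 0 = ξ * x 1) (k : ℕ) :
    |act (convMatrix ξ k).adjugate x 1| =
      |qden ξ (k + 1) * ξ - pnum ξ (k + 1)| * |x 1| := by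
  have hact : act (convMatrix ξ k).adjugate x 1 =
      -((qden ξ (k + 1) * ξ - pnum ξ (k + 1)) * x 1) := by
    simp only [act_apply, Matrix.adjugate_fin_two, Matrix.of_apply, Matrix.cons_val_zero,
      Matrix.cons_val_one, Int.cast_neg, convMatrix_zero_zero hξ, convMatrix_one_zero hξ, hx]
    ring
  rw [hact, abs_neg, abs_mul]

lemma abs_convMatrix_mul_sub_div_le (hξ : Irrational ξ) (hx : x 0 = ξ * x 1) (k : ℕ) :
    |convMatrix ξ k 1 0 * x 0 - convMatrix ξ k 0 0 * x 1| / |(convMatrix ξ k 1 0 : ℝ)| ≤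
      |x 1| * (1 / (qden ξ (k + 1) * qden ξ (k + 2))) := by
  have hq := qden_pos hξ (k + 1)
  rw [convMatrix_one_zero hξ, convMatrix_zero_zero hξ, hx, ← mul_assoc, ← sub_mul, abs_mul,
    abs_of_pos hq]
  calc |qden ξ (k + 1) * ξ - pnum ξ (k + 1)| * |x 1| / qden ξ (k + 1)
      ≤ 1 / qden ξ (k + 2) * |x 1| / qden ξ (k + 1) := by
        gcongr
        exact abs_qden_mul_sub_pnum_le hξ (k + 1)
    _ = |x 1| * (1 / (qden ξ (k + 1) * qden ξ (k + 2))) := by ring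

variable {η : ℝ} {y : Fin 2 → ℝ}

lemma abs_act_adjugate_add_div_le (hξ : Irrational ξ) (hx₁ : x 1 ≠ 0) (hx : x 0 = ξ * x 1)
    (k : ℕ) {r : ℝ} (hr : 0 ≤ r) :
    (|act (convMatrix ξ k).adjugate x 0| + r) / |act (convMatrix ξ k).adjugate x 1| ≤
      2 * qden ξ (k + 2) * (1 / qden ξ (k + 1) + r / |x 1|) := by
  have hq := qden_pos hξ (k + 1)
  have hQ := qden_pos hξ (k + 2)
  rw [abs_act_adjugate_convMatrix_zero hξ hx, abs_act_adjugate_convMatrix_one hξ hx]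
  calc (|qden ξ k * ξ - pnum ξ k| * |x 1| + r) /
        (|qden ξ (k + 1) * ξ - pnum ξ (k + 1)| * |x 1|)
      ≤ (1 / qden ξ (k + 1) * |x 1| + r) / (1 / (2 * qden ξ (k + 2)) * |x 1|) := by
        gcongr
        · exact abs_qden_mul_sub_pnum_le hξ k
        · exact one_div_le_abs_qden_mul_sub_pnum hξ (k + 1)
    _ = 2 * qden ξ (k + 2) * (1 / qden ξ (k + 1) + r / |x 1|) := by field_simp

lemma two_mul_abs_act_mul_mnorm_le (hξ : Irrational ξ) (hη : Irrational η)
    (hx : x 0 = ξ * x 1) (j k : ℕ) :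
    2 * |act (convMatrix ξ k).adjugate x 1| * mnorm (convMatrix η j) ≤
      2 * |x 1| * (1 + |η|) * (qden η (j + 1) / qden ξ (k + 2)) := by
  have hQ := qden_pos hξ (k + 2)
  rw [abs_act_adjugate_convMatrix_one hξ hx]
  calc 2 * (|qden ξ (k + 1) * ξ - pnum ξ (k + 1)| * |x 1|) * mnorm (convMatrix η j)
      ≤ 2 * (1 / qden ξ (k + 2) * |x 1|) * ((1 + |η|) * qden η (j + 1)) := by
        gcongr
        · exact mnorm_nonneg _
        · exact abs_qden_mul_sub_pnum_le hξ (k + 1)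
        · exact mnorm_convMatrix_le hη j
    _ = 2 * |x 1| * (1 + |η|) * (qden η (j + 1) / qden ξ (k + 2)) := by ring

lemma mnorm_mul_mnorm_mul_le (hξ : Irrational ξ) (hη : Irrational η) (hx₁ : x 1 ≠ 0)
    (hx : x 0 = ξ * x 1) (j k : ℕ) :
    4 * mnorm (convMatrix η j) * mnorm (convMatrix ξ k).adjugate *
        (2 + (|act (convMatrix ξ k).adjugate x 0| + |y 1 / convMatrix η j 1 0|) /
          |act (convMatrix ξ k).adjugate x 1|) ≤
      8 * (1 + |ξ|) * (1 + |η|) * (2 + |y 1| / |x 1|) *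
        (qden ξ (k + 2) * (qden ξ (k + 1) + qden η (j + 1))) := by
  have hq := qden_pos hξ (k + 1)
  have hQ := qden_pos hξ (k + 2)
  have hqQ : qden ξ (k + 1) ≤ qden ξ (k + 2) := monotone_qden ξ (k + 1).le_succ
  have hs := qden_pos hη (j + 1)
  have hratio := abs_act_adjugate_add_div_le hξ hx₁ hx k
    (abs_nonneg (y 1 / convMatrix η j 1 0))
  rw [mnorm_adjugate]
  calc _ ≤ 4 * ((1 + |η|) * qden η (j + 1)) * ((1 + |ξ|) * qden ξ (k + 1)) *
        (2 + 2 * qden ξ (k + 2) *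
          (1 / qden ξ (k + 1) + |y 1 / convMatrix η j 1 0| / |x 1|)) := by
        have := mnorm_nonneg (convMatrix η j)
        have := mnorm_nonneg (convMatrix ξ k)
        gcongr
        · exact mnorm_convMatrix_le hη j
        · exact mnorm_convMatrix_le hξ k
    _ = 8 * (1 + |ξ|) * (1 + |η|) * (qden η (j + 1) * (qden ξ (k + 1) + qden ξ (k + 2)) +
          |y 1| / |x 1| * (qden ξ (k + 2) * qden ξ (k + 1))) := by
        rw [convMatrix_one_zero hη, abs_div, abs_of_pos hs]
        field_simp
        ring
    _ ≤ 8 * (1 + |ξ|) * (1 + |η|) * ((2 + |y 1| / |x 1|) *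
          (qden ξ (k + 2) * (qden ξ (k + 1) + qden η (j + 1)))) := by
        have hsQ : 0 ≤ |y 1| / |x 1| * (qden ξ (k + 2) * qden η (j + 1)) := by positivity
        have hqQ' : 0 ≤ qden ξ (k + 2) * qden ξ (k + 1) := by positivity
        have hsq := mul_le_mul_of_nonneg_left hqQ hs.le
        gcongr
        linarith
    _ = _ := by ring

lemma exists_vnorm_act_sub_le_qden (hξ : Irrational ξ) (hη : Irrational η) (hx₁ : x 1 ≠ 0)
    (hx : x 0 = ξ * x 1) (hy : y 0 = η * y 1) :
    ∃ C > 0, ∀ j k : ℕ, ∃ γ : Matrix (Fin 2) (Fin 2) ℤ, γ.det = 1 ∧ act γ x ≠ y ∧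
      vnorm (act γ x - y) ≤ C * (qden η (j + 1) / qden ξ (k + 2) +
        1 / (qden η (j + 1) * qden η (j + 2))) ∧
      mnorm γ ≤ C * (qden ξ (k + 2) * (qden ξ (k + 1) + qden η (j + 1))) := by
  set C₁ := 2 * |x 1| * (1 + |η|) + |y 1|
  set C₂ := 8 * (1 + |ξ|) * (1 + |η|) * (2 + |y 1| / |x 1|)
  refine ⟨max C₁ C₂, lt_max_of_lt_left (by positivity), fun j k => ?_⟩
  have hq := qden_pos hξ (k + 1)
  have hQ := qden_pos hξ (k + 2)
  have hs := qden_pos hη (j + 1)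
  have hS := qden_pos hη (j + 2)
  have hs₀ : convMatrix η j 1 0 ≠ 0 := by
    rw [← Int.cast_ne_zero (α := ℝ), convMatrix_one_zero hη]
    exact hs.ne'
  have hact : act (convMatrix ξ k).adjugate x 1 ≠ 0 := by
    rw [← abs_pos, abs_act_adjugate_convMatrix_one hξ hx]
    have := (one_div_pos.2 (by positivity)).trans_le
      (one_div_le_abs_qden_mul_sub_pnum hξ (k + 1))
    positivity
  have hdet : (convMatrix ξ k).adjugate.det = 1 := by
    rw [Matrix.det_adjugate, det_convMatrix hξ, one_pow]
  obtain ⟨γ, hγ, hne, hv, hm⟩ :=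
    exists_det_eq_one_vnorm_act_sub_le x y hdet (det_convMatrix hη j) hs₀ hact
  refine ⟨γ, hγ, hne, hv.trans ?_, (hm.trans (mnorm_mul_mnorm_mul_le hξ hη hx₁ hx j k)).trans
    (by gcongr; exact le_max_right _ _)⟩
  refine (add_le_add (two_mul_abs_act_mul_mnorm_le hξ hη hx j k)
    (abs_convMatrix_mul_sub_div_le hη hy j)).trans ?_
  rw [mul_add (max C₁ C₂)]
  gcongr
  · exact (le_add_of_nonneg_right (abs_nonneg _)).trans (le_max_left _ _)
  · exact (le_add_of_nonneg_left (by positivity)).trans (le_max_left _ _)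

end ConvergentMatrix

section Interlacing

variable {α : Type*} [LinearOrder α] [NoMaxOrder α] {f g : ℕ → α} {X : α}

lemma exists_le_lt_succ (hf : Tendsto f atTop atTop) {K : ℕ} (hK : f K ≤ X) :
    ∃ k ≥ K, f k ≤ X ∧ X < f (k + 1) := by
  by_contra! hcon
  have hle : ∀ k ≥ K, f k ≤ X := fun k hk => by
    induction k, hk using Nat.le_induction with
    | base => exact hK
    | succ k hk ih => exact hcon k hk ih
  obtain ⟨k, hk, hX⟩ := ((eventually_ge_atTop K).and (hf.eventually_gt_atTop X)).exists
  exact hX.not_ge (hle k hk)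

lemma eventually_exists_le_lt_succ (hf : Tendsto f atTop atTop) {P : ℕ → Prop}
    (hP : ∀ᶠ k in atTop, P k) : ∀ᶠ X in atTop, ∃ k, P k ∧ f k ≤ X ∧ X < f (k + 1) := by
  obtain ⟨K, hK⟩ := eventually_atTop.1 hP
  filter_upwards [eventually_ge_atTop (f K)] with X hX
  obtain ⟨k, hk, hkX⟩ := exists_le_lt_succ hf hX
  exact ⟨k, hK k hk, hkX⟩

lemma frequently_interlace (hf : Tendsto f atTop atTop) (hg : Tendsto g atTop atTop)
    (hg_mono : Monotone g) :
    ∃ᶠ k in atTop, ∃ j, f k ≤ g j ∧ g j ≤ f (k + 1) ∧ f (k + 1) < g (j + 1) := by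
  refine frequently_atTop.2 fun K => ?_
  obtain ⟨J, hJ⟩ := (hg.eventually_ge_atTop (f K)).exists
  obtain ⟨k, hk, hkJ, hJk⟩ := exists_le_lt_succ hf hJ
  obtain ⟨j, hj, hjk⟩ := exists_le_lt_succ hg hJk.le
  exact ⟨k, hk, j, hkJ.trans (hg_mono hj), hjk⟩

end Interlacing

section Exponents

lemma eventually_mul_rpow_neg_le {A B a b : ℝ} (hA : 0 < A) (hB : 0 < B) (hab : a < b) :
    ∀ᶠ Z : ℝ in atTop, A * Z ^ (-b) ≤ (B * Z) ^ (-a) := by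
  have hlim := tendsto_rpow_neg_atTop (sub_pos.2 hab)
  have hpos : 0 < B ^ (-a) / A := div_pos (Real.rpow_pos_of_pos hB _) hA
  filter_upwards [hlim.eventually_le_const hpos, eventually_gt_atTop 0] with Z hZ hZ₀
  rw [Real.mul_rpow hB.le hZ₀.le, show -b = -(b - a) + -a by ring, Real.rpow_add hZ₀,
    ← mul_assoc]
  gcongr
  exact (le_div_iff₀' hA).1 hZ

variable {x y : Fin 2 → ℝ} {C μ ν : ℝ}

lemma infinite_of_exists_vnorm_lt {S : Set (Matrix (Fin 2) (Fin 2) ℤ)}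
    (h : ∀ δ > 0, ∃ γ ∈ S, act γ x ≠ y ∧ vnorm (act γ x - y) < δ) : S.Infinite := by
  intro hfin
  obtain ⟨γ₀, hγ₀, hne₀, -⟩ := h 1 one_pos
  obtain ⟨γ₁, hγ₁, hmin⟩ := Set.exists_min_image {γ ∈ S | act γ x ≠ y}
    (fun γ => vnorm (act γ x - y)) (hfin.subset (Set.sep_subset _ _)) ⟨γ₀, hγ₀, hne₀⟩
  obtain ⟨γ, hγ, hne, hlt⟩ := h _ (vnorm_sub_pos.2 hγ₁.2)
  exact hlt.not_ge (hmin γ ⟨hγ, hne⟩)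

lemma mem_muSet_of_frequently (hC : 0 < C) (hν : 0 < ν) (hμν : μ < ν)
    (h : ∃ᶠ Z : ℝ in atTop, ∃ γ : Matrix (Fin 2) (Fin 2) ℤ, γ.det = 1 ∧ act γ x ≠ y ∧
      vnorm (act γ x - y) ≤ C * Z ^ (-ν) ∧ mnorm γ ≤ C * Z) : μ ∈ muSet x y := by
  refine infinite_of_exists_vnorm_lt (x := x) (y := y) fun δ hδ => ?_
  have hlim : Tendsto (fun Z : ℝ => C * Z ^ (-ν)) atTop (nhds 0) := by
    simpa only [mul_zero] using (tendsto_rpow_neg_atTop hν).const_mul C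
  obtain ⟨Z, ⟨γ, hγ, hne, hv, hm⟩, hZ, hZδ⟩ := (h.and_eventually
    ((eventually_mul_rpow_neg_le hC hC (max_lt hμν hν)).and
      (hlim.eventually_lt_const hδ))).exists
  have hm₁ : 1 ≤ mnorm γ := one_le_mnorm fun h₀ => by simp [h₀] at hγ
  refine ⟨γ, ⟨hγ, ?_⟩, hne, hv.trans_lt hZδ⟩
  calc vnorm (act γ x - y) ≤ (C * Z) ^ (-max μ 0) := hv.trans hZ
    _ ≤ mnorm γ ^ (-max μ 0) :=
        Real.rpow_le_rpow_of_nonpos (one_pos.trans_le hm₁) hm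
          (neg_nonpos.2 (le_max_right μ 0))
    _ ≤ mnorm γ ^ (-μ) :=
        Real.rpow_le_rpow_of_exponent_le hm₁ (neg_le_neg (le_max_left μ 0))

lemma mem_muHatSet_of_eventually (hC : 0 < C) (hμν : μ < ν)
    (h : ∀ᶠ T : ℝ in atTop, ∃ γ : Matrix (Fin 2) (Fin 2) ℤ, γ.det = 1 ∧
      vnorm (act γ x - y) ≤ C * T ^ (-ν) ∧ mnorm γ ≤ C * T) : μ ∈ muHatSet x y := by
  refine eventually_atTop.1 ?_
  filter_upwards [(tendsto_id.atTop_div_const hC).eventually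
    (h.and (eventually_mul_rpow_neg_le hC hC hμν))] with T hT
  obtain ⟨⟨γ, hγ, hv, hm⟩, hexp⟩ := hT
  rw [id, mul_div_cancel₀ _ hC.ne'] at hm hexp
  exact ⟨γ, hγ, hm, hv.trans hexp⟩

end Exponents

section ErrorBounds

variable {Q s S : ℝ}

lemma rpow_neg_le_rpow_neg_div {T v τ : ℝ} (hT : 0 < T) (hQ : 0 < Q) (hv : 0 < v) (hτ : 0 ≤ τ)
    (hTQ : T ≤ Q ^ v) : Q ^ (-τ) ≤ T ^ (-(τ / v)) := by
  calc Q ^ (-τ) = (Q ^ v) ^ (-(τ / v)) := by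
        rw [← Real.rpow_mul hQ.le, mul_neg, mul_div_cancel₀ _ hv.ne']
    _ ≤ T ^ (-(τ / v)) :=
        Real.rpow_le_rpow_of_nonpos hT hTQ (neg_nonpos.2 (by positivity))

lemma div_add_one_div_le_rpow_neg_one_third (hs : 0 < s) (hS : 0 < S) (hsQ : s ^ 3 ≤ Q)
    (hQS : Q ≤ S ^ 3) : s / Q + 1 / (s * S) ≤ 2 * (Q * s ^ 3) ^ (-(1 / 3) : ℝ) := by
  have hQ : 0 < Q := (by positivity : 0 < s ^ 3).trans_le hsQ
  have hlog := Real.log_le_log (by positivity) hsQ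
  have hlog' := Real.log_le_log hQ hQS
  rw [Real.log_pow, Nat.cast_ofNat] at hlog hlog'
  have hlogZ : Real.log (Q * s ^ 3) = Real.log Q + 3 * Real.log s := by
    rw [Real.log_mul hQ.ne' (by positivity), Real.log_pow, Nat.cast_ofNat]
  have h₁ : s / Q ≤ (Q * s ^ 3) ^ (-(1 / 3) : ℝ) := by
    rw [Real.le_rpow_iff_log_le (by positivity) (by positivity), hlogZ,
      Real.log_div hs.ne' hQ.ne']
    linarith
  have h₂ : 1 / (s * S) ≤ (Q * s ^ 3) ^ (-(1 / 3) : ℝ) := by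
    rw [Real.le_rpow_iff_log_le (by positivity) (by positivity), hlogZ, one_div, Real.log_inv,
      Real.log_mul hs.ne' hS.ne']
    linarith
  linarith

lemma div_add_one_div_le_rpow {s₀ w : ℝ} (hs₀ : 0 < s₀) (hs : 0 < s) (hS : 0 < S)
    (hw : 0 < w) (hsw : s ≤ s₀ ^ w) (hSw : S ≤ s ^ w) (hsQ : s₀ * s ^ 2 ≤ Q)
    (hQS : Q ≤ s * S ^ 2) :
    s / Q + 1 / (s * S) ≤ 2 * Q ^ (-((w + 1) / (2 * w + 1))) := by
  have hQ : 0 < Q := (by positivity : 0 < s₀ * s ^ 2).trans_le hsQ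
  have hw' : 0 < 2 * w + 1 := by positivity
  rw [Real.le_rpow_iff_log_le hs hs₀] at hsw
  rw [Real.le_rpow_iff_log_le hS hs] at hSw
  have hlog := Real.log_le_log (by positivity) hsQ
  have hlog' := Real.log_le_log hQ hQS
  rw [Real.log_mul hs₀.ne' (by positivity), Real.log_pow, Nat.cast_ofNat] at hlog
  rw [Real.log_mul hs.ne' (by positivity), Real.log_pow, Nat.cast_ofNat] at hlog'
  have h₁ : s / Q ≤ Q ^ (-((w + 1) / (2 * w + 1))) := by
    rw [Real.le_rpow_iff_log_le (by positivity) hQ, Real.log_div hs.ne' hQ.ne', ← neg_div,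
      div_mul_eq_mul_div, le_div_iff₀ hw']
    linarith [mul_le_mul_of_nonneg_left hlog hw.le]
  have h₂ : 1 / (s * S) ≤ Q ^ (-((w + 1) / (2 * w + 1))) := by
    rw [Real.le_rpow_iff_log_le (by positivity) hQ, one_div, Real.log_inv,
      Real.log_mul hs.ne' hS.ne', ← neg_div, div_mul_eq_mul_div, le_div_iff₀ hw']
    linarith [mul_le_mul_of_nonneg_left hlog' (by positivity : 0 ≤ w + 1)]
  linarith

end ErrorBounds

section OrbitExponents

variable {x y : Fin 2 → ℝ} {ξ η μ : ℝ}

lemma mem_muSet_of_lt_one_third (hξ : Irrational ξ) (hη : Irrational η) (hx₁ : x 1 ≠ 0)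
    (hx : x 0 = ξ * x 1) (hy : y 0 = η * y 1) (hμ : μ < 1 / 3) : μ ∈ muSet x y := by
  obtain ⟨C, hC, hγ⟩ := exists_vnorm_act_sub_le_qden hξ hη hx₁ hx hy
  have hq := (tendsto_add_atTop_iff_nat 1).2 (tendsto_qden_atTop hξ)
  have hs : Tendsto (fun j => qden η (j + 1) ^ 3) atTop atTop :=
    (tendsto_pow_atTop three_ne_zero).comp
      ((tendsto_add_atTop_iff_nat 1).2 (tendsto_qden_atTop hη))
  have hs_mono : Monotone fun j => qden η (j + 1) ^ 3 := fun i j hij =>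
    pow_le_pow_left₀ (qden_pos hη _).le (monotone_qden η (by lia)) 3
  refine mem_muSet_of_frequently (C := 2 * C) (by positivity) (by norm_num) hμ
    (frequently_atTop.2 fun Z₀ => ?_)
  obtain ⟨k, ⟨j, hqs, hsQ, hQS⟩, hk⟩ := ((frequently_interlace hq hs hs_mono).and_eventually
    (hq.eventually_ge_atTop Z₀)).exists
  obtain ⟨γ, hdet, hne, hv, hm⟩ := hγ j k
  have hs₁ := one_le_qden hη (j + 1)
  have hQ₁ := one_le_qden hξ (k + 2)
  have hs₃ : qden η (j + 1) ≤ qden η (j + 1) ^ 3 := le_self_pow₀ hs₁ three_ne_zero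
  refine ⟨qden ξ (k + 2) * qden η (j + 1) ^ 3, ?_, γ, hdet, hne, ?_, ?_⟩
  · exact (hk.trans hqs).trans (le_mul_of_one_le_left (by positivity) hQ₁)
  · rw [mul_comm 2, mul_assoc C]
    exact hv.trans (mul_le_mul_of_nonneg_left
      (div_add_one_div_le_rpow_neg_one_third (qden_pos hη _) (qden_pos hη _) hsQ hQS.le) hC.le)
  · calc mnorm γ ≤ C * (qden ξ (k + 2) * (qden ξ (k + 1) + qden η (j + 1))) := hm
      _ ≤ C * (qden ξ (k + 2) * (qden η (j + 1) ^ 3 + qden η (j + 1) ^ 3)) := by gcongr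
      _ = 2 * C * (qden ξ (k + 2) * qden η (j + 1) ^ 3) := by ring

lemma eventually_exists_qden_error_le {w : ℝ} (hξ : Irrational ξ) (hη : Irrational η)
    (hw : 0 < w) (hwη : w ∉ omegaSet η) :
    ∀ᶠ k in atTop, ∃ j, qden η (j + 1) ≤ qden ξ (k + 2) ∧
      qden η (j + 1) / qden ξ (k + 2) + 1 / (qden η (j + 1) * qden η (j + 2)) ≤
        2 * qden ξ (k + 2) ^ (-((w + 1) / (2 * w + 1))) := by
  have hgrowth := eventually_qden_succ_lt_rpow hη hwη
  have hs : Tendsto (fun j => qden η j * qden η (j + 1) ^ 2) atTop atTop :=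
    tendsto_atTop_mono (fun j => le_mul_of_one_le_right (qden_pos hη j).le
      (one_le_pow₀ (one_le_qden hη _))) (tendsto_qden_atTop hη)
  filter_upwards [((tendsto_add_atTop_iff_nat 2).2 (tendsto_qden_atTop hξ)).eventually
    (eventually_exists_le_lt_succ hs
      (hgrowth.and ((tendsto_add_atTop_nat 1).eventually hgrowth)))] with k hk
  obtain ⟨j, ⟨hj, hj'⟩, hsQ, hQS⟩ := hk
  refine ⟨j, le_trans ?_ hsQ, div_add_one_div_le_rpow (qden_pos hη j) (qden_pos hη _)
    (qden_pos hη _) hw hj.le hj'.le hsQ hQS.le⟩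
  calc qden η (j + 1) ≤ qden η (j + 1) ^ 2 := le_self_pow₀ (one_le_qden hη _) two_ne_zero
    _ ≤ qden η j * qden η (j + 1) ^ 2 :=
        le_mul_of_one_le_left (sq_nonneg _) (one_le_qden hη j)

lemma mem_muHatSet_of_lt_of_notMem_omegaSet {w₁ w₂ : ℝ} (hξ : Irrational ξ)
    (hη : Irrational η) (hx₁ : x 1 ≠ 0) (hx : x 0 = ξ * x 1) (hy : y 0 = η * y 1)
    (hw₁ : 0 < w₁) (hw₂ : 0 < w₂) (hwξ : w₁ ∉ omegaSet ξ) (hwη : w₂ ∉ omegaSet η)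
    (hμ : μ < (w₂ + 1) / (2 * w₂ + 1) / (2 * w₁)) : μ ∈ muHatSet x y := by
  obtain ⟨C, hC, hγ⟩ := exists_vnorm_act_sub_le_qden hξ hη hx₁ hx hy
  have hq : Tendsto (fun k => qden ξ (k + 2) ^ 2) atTop atTop :=
    (tendsto_pow_atTop two_ne_zero).comp
      ((tendsto_add_atTop_iff_nat 2).2 (tendsto_qden_atTop hξ))
  have hgrowth := (tendsto_add_atTop_nat 2).eventually (eventually_qden_succ_lt_rpow hξ hwξ)
  refine mem_muHatSet_of_eventually (C := 2 * C) (by positivity) hμ ?_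
  filter_upwards [eventually_exists_le_lt_succ hq
    ((eventually_exists_qden_error_le hξ hη hw₂ hwη).and hgrowth)] with T hT
  obtain ⟨k, ⟨⟨j, hsQ, herr⟩, hk⟩, hQT, hTR⟩ := hT
  obtain ⟨γ, hdet, -, hv, hm⟩ := hγ j k
  have hQ := qden_pos hξ (k + 2)
  have hqQ : qden ξ (k + 1) ≤ qden ξ (k + 2) := monotone_qden ξ (k + 1).le_succ
  have hTQ : T ≤ qden ξ (k + 2) ^ (2 * w₁) := by
    calc T ≤ qden ξ (k + 3) ^ 2 := hTR.le
      _ ≤ (qden ξ (k + 2) ^ w₁) ^ 2 := pow_le_pow_left₀ (qden_pos hξ _).le hk.le 2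
      _ = qden ξ (k + 2) ^ (2 * w₁) := by
          rw [mul_comm 2 w₁, Real.rpow_mul hQ.le, Real.rpow_two]
  refine ⟨γ, hdet, ?_, ?_⟩
  · calc vnorm (act γ x - y)
        ≤ C * (2 * qden ξ (k + 2) ^ (-((w₂ + 1) / (2 * w₂ + 1)))) :=
          hv.trans (mul_le_mul_of_nonneg_left herr hC.le)
      _ ≤ C * (2 * T ^ (-((w₂ + 1) / (2 * w₂ + 1) / (2 * w₁)))) := by
          gcongr
          exact rpow_neg_le_rpow_neg_div ((pow_pos hQ 2).trans_le hQT) hQ (by positivity)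
            (by positivity) hTQ
      _ = 2 * C * T ^ (-((w₂ + 1) / (2 * w₂ + 1) / (2 * w₁))) := by ring
  · calc mnorm γ ≤ C * (qden ξ (k + 2) * (qden ξ (k + 1) + qden η (j + 1))) := hm
      _ ≤ C * (qden ξ (k + 2) * (qden ξ (k + 2) + qden ξ (k + 2))) := by gcongr
      _ = 2 * C * qden ξ (k + 2) ^ 2 := by ring
      _ ≤ 2 * C * T := by gcongr

lemma exists_gt_lt_exponent {a b : ℝ} (ha : 0 < a) (hb : 0 < b)
    (hμ : μ < (b + 1) / (2 * (2 * b + 1) * a)) :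
    ∃ w₁ > a, ∃ w₂ > b, μ < (w₂ + 1) / (2 * w₂ + 1) / (2 * w₁) := by
  have hcont : ContinuousAt
      (fun ε : ℝ => (b + ε + 1) / (2 * (b + ε) + 1) / (2 * (a + ε))) 0 := by
    fun_prop (disch := simp only [add_zero]; positivity)
  have hμ₀ : μ < (b + 0 + 1) / (2 * (b + 0) + 1) / (2 * (a + 0)) := by
    rwa [add_zero, add_zero, div_div, ← mul_assoc, mul_comm _ (2 : ℝ)]
  obtain ⟨ε, hε, hpos⟩ := (((hcont.eventually_const_lt hμ₀).filter_mono
    nhdsWithin_le_nhds).and (self_mem_nhdsWithin (s := Set.Ioi (0 : ℝ)))).exists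
  exact ⟨a + ε, lt_add_of_pos_right a hpos, b + ε, lt_add_of_pos_right b hpos, hε⟩

end OrbitExponents

/-- for `x`, `y` with irrational slopes, `μ(x, y) ≥ 1/3` and
`μ̂(x, y) ≥ (ω(y)+1)/(2(2ω(y)+1)ω(ξ)) ≥ 1/(4ω(ξ))`. -/
theorem stmt10 (x y : Fin 2 → ℝ) (hx2 : x 1 ≠ 0) (hξ : Irrational (x 0 / x 1))
    (hy2 : y 1 ≠ 0) (hyirr : Irrational (y 0 / y 1))
    (wξ wy : ℝ) (hwξ : IsLUB (omegaSet (x 0 / x 1)) wξ)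
    (hwy : IsLUB (omegaSet (y 0 / y 1)) wy) :
    (∀ μ : ℝ, μ < 1 / 3 → μ ∈ muSet x y) ∧
      (∀ μ : ℝ, μ < (wy + 1) / (2 * (2 * wy + 1) * wξ) → μ ∈ muHatSet x y) ∧
      1 / (4 * wξ) ≤ (wy + 1) / (2 * (2 * wy + 1) * wξ) := by
  have hwξ_pos : 0 < wξ := one_pos.trans_le (hwξ.1 (one_mem_omegaSet hξ))
  have hwy_pos : 0 < wy := one_pos.trans_le (hwy.1 (one_mem_omegaSet hyirr))
  have hx : x 0 = x 0 / x 1 * x 1 := (div_mul_cancel₀ _ hx2).symm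
  have hy : y 0 = y 0 / y 1 * y 1 := (div_mul_cancel₀ _ hy2).symm
  refine ⟨fun μ hμ => mem_muSet_of_lt_one_third hξ hyirr hx2 hx hy hμ, fun μ hμ => ?_, ?_⟩
  · obtain ⟨w₁, hw₁, w₂, hw₂, hμw⟩ := exists_gt_lt_exponent hwξ_pos hwy_pos hμ
    exact mem_muHatSet_of_lt_of_notMem_omegaSet hξ hyirr hx2 hx hy (hwξ_pos.trans hw₁)
      (hwy_pos.trans hw₂) (fun h => hw₁.not_ge (hwξ.1 h)) (fun h => hw₂.not_ge (hwy.1 h)) hμw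
  · rw [div_le_div_iff₀ (by positivity) (by positivity)]
    linarith
end
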